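/- Let E be a finite extension of ℚ_ℓ (ℓ any prime, possibly ℓ = p), let E_∞/E be a ℤ_p-extension with layers E_n and Γ_n = Gal(E_∞/E_n). Let L_n denote the p-completion of E_n^× and L_∞ = lim← L_n the inverse limit under norm maps. Then for each n there is an exact sequence 0 → (L_∞)_{Γ_n} → L_n → Gal(E_∞/E_n) → 0, where the second map is the local Artin reciprocity map. -/

import Mathlib

open scoped Classical

/-- The subgroup `G^{p^m}` of a commutative group. -/
def pModRange (p : ℕ) (G : Type*) [CommGroup G] (m : ℕ) : Subgroup G :=
  (powMonoidHom (p ^ m) : G →* G).range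

lemma pModRange_le_comap {p : ℕ} {G H : Type*} [CommGroup G] [CommGroup H]
    (φ : G →* H) (m : ℕ) : pModRange p G m ≤ (pModRange p H m).comap φ := by
  rintro x ⟨y, rfl⟩
  exact ⟨φ y, by simp [powMonoidHom]⟩

lemma pModRange_succ_le (p : ℕ) (G : Type*) [CommGroup G] (m : ℕ) :
    pModRange p G (m + 1) ≤ (pModRange p G m).comap (MonoidHom.id G) := by
  rintro x ⟨y, rfl⟩
  refine ⟨y ^ p, ?_⟩
  simp only [powMonoidHom_apply, MonoidHom.id_apply, ← pow_mul]
  rw [← pow_succ']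

/-- The projective system `m ↦ G/G^{p^m}` whose inverse limit is the `p`-completion. -/
abbrev pTower (p : ℕ) (G : Type*) [CommGroup G] := ∀ m : ℕ, G ⧸ pModRange p G m

/-- Functoriality of the projective system of `p`-power quotients. -/
def pTowerMap (p : ℕ) {G H : Type*} [CommGroup G] [CommGroup H] (φ : G →* H) :
    pTower p G →* pTower p H :=
  Pi.monoidHom fun m =>
    (QuotientGroup.map _ _ φ (pModRange_le_comap φ m)).comp (Pi.evalMonoidHom _ m)

/-- The `p`-completion `Ḡ = lim← G/G^{p^m}` of a commutative group `G`, as the subgroup of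
coherent sequences in the projective system. -/
def pCompletion (p : ℕ) (G : Type*) [CommGroup G] : Subgroup (pTower p G) where
  carrier := {f | ∀ m,
    QuotientGroup.map _ _ (MonoidHom.id G) (pModRange_succ_le p G m) (f (m + 1)) = f m}
  one_mem' := by intro m; simp
  mul_mem' := by
    intro a b ha hb m
    rw [Pi.mul_apply, Pi.mul_apply, map_mul, ha m, hb m]
  inv_mem' := by
    intro a ha m
    rw [Pi.inv_apply, Pi.inv_apply, map_inv, ha m]

/-- `Γ_n = Γ^{p^n}`, the subgroup of `Γ = Gal(E_∞/E) ≅ ℤ_p` corresponding to `p^n ℤ_p`. -/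
noncomputable def gammaSub (p : ℕ) [Fact p.Prime] {E Einf : Type*} [Field E] [Field Einf] [Algebra E Einf]
    (ρ : (Einf ≃ₐ[E] Einf) ≃* Multiplicative ℤ_[p]) (n : ℕ) : Subgroup (Einf ≃ₐ[E] Einf) :=
  Subgroup.comap ρ.toMonoidHom
    (powMonoidHom (p ^ n) : Multiplicative ℤ_[p] →* Multiplicative ℤ_[p]).range

/-- The `n`-th layer `E_n = E_∞^{Γ_n}` of the `ℤ_p`-extension `E_∞/E`. -/
noncomputable def zpLayer (p : ℕ) [Fact p.Prime] {E Einf : Type*} [Field E] [Field Einf] [Algebra E Einf]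
    (ρ : (Einf ≃ₐ[E] Einf) ≃* Multiplicative ℤ_[p]) (n : ℕ) : IntermediateField E Einf :=
  IntermediateField.fixedField (gammaSub p ρ n)

section

variable (p : ℕ) [Fact p.Prime] {E Einf : Type*} [Field E] [Field Einf] [Algebra E Einf]
  (ρ : (Einf ≃ₐ[E] Einf) ≃* Multiplicative ℤ_[p])
  (Nm : ∀ n : ℕ, (↥(zpLayer p ρ (n + 1)))ˣ →* (↥(zpLayer p ρ n))ˣ)

/-- `L_∞ = lim← L_n`: the inverse limit, along the norm maps, of the `p`-completions
`L_n` of the unit groups `E_nˣ` of the layers. -/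
noncomputable def normLimit : Subgroup (∀ n : ℕ, pTower p (↥(zpLayer p ρ n))ˣ) where
  carrier := {g | (∀ n, g n ∈ pCompletion p (↥(zpLayer p ρ n))ˣ) ∧
    ∀ n, pTowerMap p (Nm n) (g (n + 1)) = g n}
  one_mem' := ⟨fun n => (pCompletion p _).one_mem, fun n => by simp⟩
  mul_mem' := by
    rintro a b ⟨ha1, ha2⟩ ⟨hb1, hb2⟩
    refine ⟨fun n => (pCompletion p _).mul_mem (ha1 n) (hb1 n), fun n => ?_⟩
    rw [Pi.mul_apply, Pi.mul_apply, map_mul, ha2 n, hb2 n]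
  inv_mem' := by
    rintro a ⟨ha1, ha2⟩
    refine ⟨fun n => (pCompletion p _).inv_mem (ha1 n), fun n => ?_⟩
    rw [Pi.inv_apply, Pi.inv_apply, map_inv, ha2 n]

/-- Projection `L_∞ → L_n` from the inverse limit to the `p`-completion of the `n`-th
layer's units. -/
noncomputable def normLimitProj (n : ℕ) :
    ↥(normLimit p ρ Nm) →* ↥(pCompletion p (↥(zpLayer p ρ n))ˣ) :=
  MonoidHom.codRestrict ((Pi.evalMonoidHom _ n).comp (normLimit p ρ Nm).subtype) _
    (fun g => g.2.1 n)

end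

/-! Let `γ` be a topological generator of `Gal(E_∞/E)`, so that `E_n` is the fixed field of
`γ ^ p ^ n` and `E_{n+1}/E_n` is cyclic of degree `p`. Counting Herbrand quotients of unit groups
shows that the norm has index `p` in each step. The norm groups of `E_{n+k}/E_n` therefore have
index at most `p ^ k`, and Hilbert 90 makes the quotients cyclic of order exactly `p ^ k`; passing
to the limit over `k`, the norm-compatible sequences form the kernel of a surjection from the
`p`-completion of `E_nˣ` to `ℤ_p`. A norm-compatible sequence that is trivial at level `n` is, at
each higher level, `γ ^ p ^ n - 1` of some element by Hilbert 90, and compactness lets these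
elements be chosen compatibly.
-/

open scoped Polynomial

/-! ### Herbrand quotients -/

section Index

variable {A D C : Type*} [AddCommGroup A] [AddCommGroup D] [AddCommGroup C]

lemma card_eq_card_inf_mul_relIndex (H K : AddSubgroup A) :
    Nat.card H = Nat.card (H ⊓ K : AddSubgroup A) * K.relIndex H := by
  have h := AddSubgroup.relIndex_mul_relIndex ⊥ (H ⊓ K) H bot_le inf_le_left
  rwa [AddSubgroup.relIndex_bot_left, AddSubgroup.relIndex_bot_left,
    AddSubgroup.inf_relIndex_left, eq_comm] at h

lemma relIndex_mul_index_sup (H K : AddSubgroup A) :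
    H.relIndex K * (H ⊔ K).index = H.index := by
  rw [← AddSubgroup.relIndex_sup_left]
  exact AddSubgroup.relIndex_mul_index le_sup_left

lemma relIndex_map_range (f : A →+ C) (H : AddSubgroup A) :
    (H.map f).relIndex f.range = (H ⊔ f.ker).index := by
  rw [f.range_eq_map, AddSubgroup.relIndex_map_map, top_sup_eq, AddSubgroup.relIndex_top_right]

variable {ι : D →+ A} {π : A →+ C} {f : A →+ A} {fD : D →+ D} {fC : C →+ C}

lemma card_ker_eq_of_injective (hι : Function.Injective ι) (hD : f.comp ι = ι.comp fD) :
    Nat.card f.ker = Nat.card fD.ker * ι.range.relIndex f.ker := by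
  have h : fD.ker.map ι = f.ker ⊓ ι.range := by
    rw [inf_comm, ← AddSubgroup.map_comap_eq, AddMonoidHom.comap_ker, hD,
      ← AddMonoidHom.comap_ker, AddMonoidHom.ker_eq_bot ι hι]
    rfl
  rw [card_eq_card_inf_mul_relIndex f.ker ι.range, ← h, AddSubgroup.card_map_of_injective hι]

lemma index_range_eq_of_injective (hι : Function.Injective ι) (hD : f.comp ι = ι.comp fD) :
    fD.range.index = (ι.range ⊔ f.ker).relIndex (ι.range.comap f) * f.range.relIndex ι.range := by
  have h : ι.range.map f = fD.range.map ι := by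
    rw [← AddMonoidHom.range_comp, hD, AddMonoidHom.range_comp]
  have h1 : fD.range.index = (ι.range.map f).relIndex ι.range := by
    rw [h, relIndex_map_range, AddMonoidHom.ker_eq_bot ι hι, sup_bot_eq]
  have h2 : (ι.range.map f).relIndex (f.range ⊓ ι.range) =
      (ι.range ⊔ f.ker).relIndex (ι.range.comap f) := by
    rw [← AddSubgroup.map_comap_eq, AddSubgroup.relIndex_map_map,
      sup_eq_left.2 (f.ker_le_comap ι.range)]
  rw [h1, ← h2, ← AddSubgroup.inf_relIndex_right f.range]
  refine (AddSubgroup.relIndex_mul_relIndex _ _ _ (le_inf ?_ ?_) inf_le_right).symm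
  · exact AddSubgroup.map_le_range f _
  · rw [h]; exact AddSubgroup.map_le_range ι _

lemma index_range_eq_of_surjective (hπ : Function.Surjective π) (hC : π.comp f = fC.comp π) :
    f.range.index = f.range.relIndex π.ker * fC.range.index := by
  have h : fC.range = f.range.map π := by
    rw [← AddMonoidHom.range_comp, hC, AddMonoidHom.range_comp, AddMonoidHom.range_eq_top.2 hπ,
      AddMonoidHom.range_eq_map]
  rw [h, AddSubgroup.index_map, AddMonoidHom.range_eq_top.2 hπ, AddSubgroup.index_top, mul_one,
    relIndex_mul_index_sup]

lemma card_ker_eq_of_surjective (hπ : Function.Surjective π) (hC : π.comp f = fC.comp π) :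
    Nat.card fC.ker =
      π.ker.relIndex f.ker * (π.ker ⊔ f.ker).relIndex (π.ker.comap f) := by
  have h : π.ker.comap f = fC.ker.comap π := by
    rw [AddMonoidHom.comap_ker, hC, AddMonoidHom.comap_ker]
  have hle : π.ker ⊔ f.ker ≤ π.ker.comap f :=
    sup_le (h ▸ π.ker_le_comap _) (f.ker_le_comap _)
  rw [← AddSubgroup.relIndex_sup_left (H := f.ker) (K := π.ker),
    AddSubgroup.relIndex_mul_relIndex _ _ _ le_sup_left hle, AddSubgroup.relIndex_ker, h,
    AddSubgroup.map_comap_eq_self_of_surjective hπ]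

end Index

/-- The endomorphism `f` of an abelian group `A` has finite kernel and cokernel, and
`(A : f A) / |ker f| = c`: this is the Herbrand quotient of the pair `(0, f)`. Finiteness is
bundled with the value, as in `HasSum`. -/
structure HasHerbrandQuotient {A : Type*} [AddCommGroup A] (f : A →+ A) (c : ℚ) : Prop where
  index_range_ne_zero : f.range.index ≠ 0
  card_ker_ne_zero : Nat.card f.ker ≠ 0
  index_range_eq : (f.range.index : ℚ) = c * Nat.card f.ker

namespace HasHerbrandQuotient

variable {A D C : Type*} [AddCommGroup A] [AddCommGroup D] [AddCommGroup C]
  {f g : A →+ A} {a b c : ℚ}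

lemma pos (h : HasHerbrandQuotient f c) : 0 < c := by
  have hi : (0 : ℚ) < f.range.index := mod_cast Nat.pos_of_ne_zero h.index_range_ne_zero
  exact pos_of_mul_pos_left (h.index_range_eq ▸ hi) (Nat.cast_nonneg _)

lemma unique (ha : HasHerbrandQuotient f a) (hb : HasHerbrandQuotient f b) : a = b :=
  mul_right_cancel₀ (Nat.cast_ne_zero.2 ha.card_ker_ne_zero)
    (ha.index_range_eq.symm.trans hb.index_range_eq)

lemma of_range_eq_of_ker_eq (h : HasHerbrandQuotient f c) (hr : g.range = f.range)
    (hk : g.ker = f.ker) : HasHerbrandQuotient g c := by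
  obtain ⟨h₁, h₂, h₃⟩ := h
  exact ⟨hr ▸ h₁, hk ▸ h₂, by rw [hr, hk, h₃]⟩

lemma of_finite [Finite A] (f : A →+ A) : HasHerbrandQuotient f 1 := by
  have h : f.range.index = Nat.card f.ker := by
    have h := f.range.card_mul_index.trans f.ker.card_mul_index.symm
    rw [AddSubgroup.index_ker, mul_comm] at h
    exact Nat.eq_of_mul_eq_mul_right Nat.card_pos h
  exact ⟨h ▸ Nat.card_pos.ne', Nat.card_pos.ne', by rw [h, one_mul]⟩

lemma id : HasHerbrandQuotient (AddMonoidHom.id A) 1 := by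
  have h : (AddMonoidHom.id A).ker = ⊥ := AddMonoidHom.ker_eq_bot _ Function.injective_id
  have h' : (AddMonoidHom.id A).range = ⊤ := AddMonoidHom.range_eq_top.2 Function.surjective_id
  constructor <;> simp [h, h']

lemma comp (hf : HasHerbrandQuotient f a) (hg : HasHerbrandQuotient g b) :
    HasHerbrandQuotient (f.comp g) (a * b) := by
  have hi : (f.comp g).range.index = (g.range ⊔ f.ker).index * f.range.index := by
    rw [AddMonoidHom.range_comp, AddSubgroup.index_map]
  have hk : Nat.card (f.comp g).ker =
      Nat.card g.ker * Nat.card (f.ker ⊓ g.range : AddSubgroup A) := by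
    have hle : g.ker ≤ (f.comp g).ker := AddMonoidHom.comap_ker f g ▸ g.ker_le_comap _
    rw [card_eq_card_inf_mul_relIndex _ g.ker, inf_eq_right.2 hle, AddSubgroup.relIndex_ker,
      ← AddMonoidHom.comap_ker, AddSubgroup.map_comap_eq, inf_comm]
  have hg₁ := relIndex_mul_index_sup g.range f.ker
  have hf₂ := card_eq_card_inf_mul_relIndex f.ker g.range
  obtain ⟨hf₁', hf₂', hf₃⟩ := hf
  obtain ⟨hg₁', hg₂', hg₃⟩ := hg
  rw [← hg₁] at hg₁' hg₃
  rw [hf₂] at hf₂' hf₃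
  have hr : (g.range.relIndex f.ker : ℚ) ≠ 0 := mod_cast left_ne_zero_of_mul hg₁'
  refine ⟨hi ▸ mul_ne_zero (right_ne_zero_of_mul hg₁') hf₁',
    hk ▸ mul_ne_zero hg₂' (left_ne_zero_of_mul hf₂'), mul_left_cancel₀ hr ?_⟩
  rw [hi, hk]
  push_cast at hf₃ hg₃ ⊢
  rw [hf₃]
  linear_combination
    a * (Nat.card (f.ker ⊓ g.range : AddSubgroup A) : ℚ) * (g.range.relIndex f.ker : ℚ) * hg₃

lemma exists_of_comp_comm (h : HasHerbrandQuotient (f.comp g) c) (hfg : f.comp g = g.comp f) :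
    ∃ c', HasHerbrandQuotient f c' := by
  have hr : (f.comp g).range ≤ f.range := by
    rw [AddMonoidHom.range_comp]; exact AddSubgroup.map_le_range f _
  have hk : f.ker ≤ (f.comp g).ker := by
    rw [hfg, ← AddMonoidHom.comap_ker]; exact f.ker_le_comap _
  have hk0 : Nat.card f.ker ≠ 0 :=
    ne_zero_of_dvd_ne_zero h.card_ker_ne_zero (AddSubgroup.card_dvd_of_le hk)
  exact ⟨f.range.index / Nat.card f.ker,
    ne_zero_of_dvd_ne_zero h.index_range_ne_zero (AddSubgroup.index_dvd_of_le hr), hk0,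
    (div_mul_cancel₀ _ (Nat.cast_ne_zero.2 hk0)).symm⟩

section Exact

variable {ι : D →+ A} {π : A →+ C} {fD : D →+ D} {fC : C →+ C}

lemma of_exact (hι : Function.Injective ι) (hπ : Function.Surjective π) (hex : π.ker = ι.range)
    (hD : f.comp ι = ι.comp fD) (hC : π.comp f = fC.comp π)
    (ha : HasHerbrandQuotient fD a) (hb : HasHerbrandQuotient fC b) :
    HasHerbrandQuotient f (a * b) := by
  have hkA := card_ker_eq_of_injective hι hD
  have hkC := card_ker_eq_of_surjective hπ hC
  have hiD := index_range_eq_of_injective hι hD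
  have hiA := index_range_eq_of_surjective hπ hC
  rw [hex] at hiA hkC
  obtain ⟨ha₁, ha₂, ha₃⟩ := ha
  obtain ⟨hb₁, hb₂, hb₃⟩ := hb
  rw [hiD] at ha₁ ha₃
  rw [hkC] at hb₂ hb₃
  have hδ : ((ι.range ⊔ f.ker).relIndex (ι.range.comap f) : ℚ) ≠ 0 :=
    mod_cast right_ne_zero_of_mul hb₂
  refine ⟨hiA ▸ mul_ne_zero (right_ne_zero_of_mul ha₁) hb₁,
    hkA ▸ mul_ne_zero ha₂ (left_ne_zero_of_mul hb₂), mul_left_cancel₀ hδ ?_⟩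
  rw [hiA, hkA]
  push_cast at ha₃ hb₃ ⊢
  rw [hb₃]
  linear_combination b * (ι.range.relIndex f.ker : ℚ) *
    ((ι.range ⊔ f.ker).relIndex (ι.range.comap f) : ℚ) * ha₃

lemma right_of_exact (hι : Function.Injective ι) (hπ : Function.Surjective π)
    (hex : π.ker = ι.range) (hD : f.comp ι = ι.comp fD) (hC : π.comp f = fC.comp π)
    (ha : HasHerbrandQuotient f a) (hb : HasHerbrandQuotient fD b) :
    HasHerbrandQuotient fC (a / b) := by
  have hkA := card_ker_eq_of_injective hι hD
  have hkC := card_ker_eq_of_surjective hπ hC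
  have hiD := index_range_eq_of_injective hι hD
  have hiA := index_range_eq_of_surjective hπ hC
  have hb₀ := hb.pos.ne'
  rw [hex] at hiA hkC
  obtain ⟨ha₁, ha₂, ha₃⟩ := ha
  obtain ⟨hb₁, hb₂, hb₃⟩ := hb
  rw [hiA] at ha₁ ha₃
  rw [hkA] at ha₂ ha₃
  rw [hiD] at hb₁ hb₃
  have he : (f.range.relIndex ι.range : ℚ) ≠ 0 := mod_cast left_ne_zero_of_mul ha₁
  refine ⟨right_ne_zero_of_mul ha₁,
    hkC ▸ mul_ne_zero (right_ne_zero_of_mul ha₂) (left_ne_zero_of_mul hb₁),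
    mul_left_cancel₀ (mul_ne_zero hb₀ he) ?_⟩
  rw [hkC]
  push_cast at ha₃ hb₃ ⊢
  rw [div_mul_eq_mul_div, mul_div_assoc', eq_div_iff hb₀]
  linear_combination b ^ 2 * ha₃ - a * b * (ι.range.relIndex f.ker : ℚ) * hb₃

lemma of_injective_of_index_ne_zero (hι : Function.Injective ι) (hfin : ι.range.index ≠ 0)
    (hD : f.comp ι = ι.comp fD) (ha : HasHerbrandQuotient fD a) : HasHerbrandQuotient f a := by
  have : ι.range.FiniteIndex := ⟨hfin⟩
  have hle : ι.range ≤ ι.range.comap f := by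
    rintro _ ⟨x, rfl⟩
    exact ⟨fD x, (DFunLike.congr_fun hD x).symm⟩
  have h := of_exact hι (QuotientAddGroup.mk'_surjective ι.range) (QuotientAddGroup.ker_mk' _) hD
    (fC := QuotientAddGroup.map _ _ f hle) rfl ha (of_finite _)
  rwa [mul_one] at h

end Exact

lemma pi {ι : Type*} [Fintype ι] {f : A →+ A} (h : HasHerbrandQuotient f c) :
    HasHerbrandQuotient (AddMonoidHom.compLeft f ι) (c ^ Fintype.card ι) := by
  have hr : (AddMonoidHom.compLeft f ι).range = AddSubgroup.pi Set.univ fun _ => f.range := by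
    ext y
    simp only [AddSubgroup.mem_pi, Set.mem_univ, true_imp_iff]
    refine ⟨?_, fun h => ?_⟩
    · rintro ⟨x, rfl⟩ i
      exact ⟨x i, rfl⟩
    · choose x hx using h
      exact ⟨x, funext hx⟩
  have hi : (AddMonoidHom.compLeft f ι).range.index = f.range.index ^ Fintype.card ι := by
    rw [hr, AddSubgroup.index_pi, Finset.prod_const, Finset.card_univ]
  have hk : Nat.card (AddMonoidHom.compLeft f ι).ker = Nat.card f.ker ^ Fintype.card ι := by
    rw [← Nat.card_eq_fintype_card, ← Nat.card_fun]
    exact Nat.card_congr ((Equiv.subtypeEquivRight fun x => funext_iff).trans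
      (Equiv.subtypePiEquivPi (p := fun (_ : ι) (x : A) => x ∈ f.ker)))
  refine ⟨hi ▸ pow_ne_zero _ h.index_range_ne_zero, hk ▸ pow_ne_zero _ h.card_ker_ne_zero, ?_⟩
  rw [hi, hk, Nat.cast_pow, Nat.cast_pow, h.index_range_eq, mul_pow]

lemma aeval_prod {ι : Type*} {τ : AddMonoid.End A} {P : ι → ℤ[X]} {q : ι → ℚ} {s : Finset ι}
    (h : ∀ i ∈ s, HasHerbrandQuotient (Polynomial.aeval τ (P i) : AddMonoid.End A) (q i)) :
    HasHerbrandQuotient (Polynomial.aeval τ (∏ i ∈ s, P i) : AddMonoid.End A) (∏ i ∈ s, q i) := by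
  induction s using Finset.induction_on with
  | empty =>
    rw [Finset.prod_empty, Finset.prod_empty, map_one]
    exact id
  | insert i s hi ih =>
    rw [Finset.prod_insert hi, Finset.prod_insert hi, map_mul]
    exact (h i (Finset.mem_insert_self i s)).comp
      (ih fun j hj => h j (Finset.mem_insert_of_mem hj))

end HasHerbrandQuotient

section PrimeOrder

open Polynomial

variable {A : Type*} [AddCommGroup A] {p : ℕ} [hp : Fact p.Prime]

/-- Over `ℤ[ζ_p]` this is the factorization `p = ∏ (1 - ζ_p ^ i)`. -/
lemma geom_sum_dvd_prod_one_sub_X_pow_sub (p : ℕ) [hp : Fact p.Prime] :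
    ∑ i ∈ Finset.range p, (X : ℤ[X]) ^ i ∣
      ∏ i ∈ Finset.range (p - 1), (1 - X ^ (i + 1)) - (p : ℤ[X]) := by
  have hζ := Complex.isPrimitiveRoot_exp p hp.out.ne_zero
  have hprod : ∏ i ∈ Finset.range (p - 1), (1 - Complex.exp (2 * Real.pi * Complex.I / p) ^ (i + 1))
      = p := by
    rw [← Nat.succ_pred_prime hp.out] at hζ
    simpa [hp.out.one_le] using hζ.prod_one_sub_pow_eq_order
  rw [← cyclotomic_prime, cyclotomic_eq_minpoly hζ hp.out.pos]
  refine minpoly.isIntegrallyClosed_dvd (hζ.isIntegral hp.out.pos) ?_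
  simp [hprod]

namespace HasHerbrandQuotient

lemma one_sub_pow {τ : AddMonoid.End A} {c : ℚ} {n k : ℕ} (hτ : τ ^ n = 1) (hk : k.Coprime n)
    (h : HasHerbrandQuotient (1 - τ : AddMonoid.End A) c) :
    HasHerbrandQuotient (1 - τ ^ k : AddMonoid.End A) c := by
  have hr (σ : AddMonoid.End A) (j : ℕ) :
      AddMonoidHom.range (1 - σ ^ j : AddMonoid.End A) ≤
        AddMonoidHom.range (1 - σ : AddMonoid.End A) := by
    rw [← mul_neg_geom_sum]
    exact (AddMonoidHom.range_comp _ _).trans_le (AddSubgroup.map_le_range _ _)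
  have hker (σ : AddMonoid.End A) (j : ℕ) :
      AddMonoidHom.ker (1 - σ : AddMonoid.End A) ≤
        AddMonoidHom.ker (1 - σ ^ j : AddMonoid.End A) := by
    rw [← geom_sum_mul_neg]
    exact (AddMonoidHom.ker_le_comap _ _).trans_eq (AddMonoidHom.comap_ker _ _)
  obtain ⟨j, hj⟩ : ∃ j, (τ ^ k) ^ j = τ :=
    exists_pow_eq_self_of_coprime (hk.coprime_dvd_right (orderOf_dvd_of_pow_eq_one hτ))
  refine h.of_range_eq_of_ker_eq ((hr τ k).antisymm ?_) (le_antisymm ?_ (hker τ k))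
  · simpa only [hj] using hr (τ ^ k) j
  · simpa only [hj] using hker (τ ^ k) j

lemma exists_one_sub_of_geom_sum_eq_zero {τ : AddMonoid.End A} {a : ℚ}
    (hτ : ∑ i ∈ Finset.range p, τ ^ i = 0)
    (ha : HasHerbrandQuotient (nsmulAddMonoidHom p : A →+ A) a) :
    ∃ c, HasHerbrandQuotient (1 - τ : AddMonoid.End A) c ∧ c ^ (p - 1) = a := by
  have hτp : τ ^ p = 1 := by
    rw [← sub_eq_zero, ← neg_eq_zero, neg_sub, ← geom_sum_mul_neg, hτ, zero_mul]
  have haeval : (aeval τ (∏ i ∈ Finset.range (p - 1), (1 - X ^ (i + 1) : ℤ[X])) : AddMonoid.End A) =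
      (nsmulAddMonoidHom p : A →+ A) := by
    obtain ⟨Q, hQ⟩ := geom_sum_dvd_prod_one_sub_X_pow_sub p
    rw [sub_eq_iff_eq_add.1 hQ, map_add, map_mul, map_sum]
    simp only [map_pow, aeval_X, hτ, zero_mul, zero_add, map_natCast]
    rfl
  obtain ⟨R, hR⟩ : (1 - X : ℤ[X]) ∣ ∏ i ∈ Finset.range (p - 1), (1 - X ^ (i + 1)) := by
    have h := Finset.dvd_prod_of_mem (fun i => (1 - X ^ (i + 1) : ℤ[X]))
      (Finset.mem_range.2 (Nat.sub_pos_of_lt hp.out.one_lt))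
    rwa [zero_add, pow_one] at h
  obtain ⟨c, hc⟩ : ∃ c, HasHerbrandQuotient (1 - τ : AddMonoid.End A) c := by
    have h1 : (1 - τ : AddMonoid.End A) = aeval τ (1 - X : ℤ[X]) := by simp
    rw [h1]
    refine exists_of_comp_comm (g := (aeval τ R : AddMonoid.End A)) (c := a) ?_ ?_
    · rw [← haeval, hR, map_mul] at ha
      exact ha
    · change aeval τ (1 - X : ℤ[X]) * aeval τ R = aeval τ R * aeval τ (1 - X : ℤ[X])
      rw [← map_mul, mul_comm, map_mul]
  refine ⟨c, hc, ?_⟩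
  have hprod : HasHerbrandQuotient
      (aeval τ (∏ i ∈ Finset.range (p - 1), (1 - X ^ (i + 1) : ℤ[X])) : AddMonoid.End A)
      (∏ _i ∈ Finset.range (p - 1), c) := by
    refine aeval_prod fun i hi => ?_
    have hcop : (i + 1).Coprime p :=
      (Nat.coprime_of_lt_prime i.succ_ne_zero (by have := Finset.mem_range.1 hi; omega) hp.out).symm
    simpa using hc.one_sub_pow hτp hcop
  rw [haeval, Finset.prod_const, Finset.card_range] at hprod
  exact hprod.unique ha

lemma nsmul_range {C : Type*} [AddCommGroup C] {n : ℕ} {a d : ℚ} (f : A →+ C)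
    (ha : HasHerbrandQuotient (nsmulAddMonoidHom n : A →+ A) a)
    (hd : HasHerbrandQuotient (nsmulAddMonoidHom n : f.ker →+ f.ker) d) :
    HasHerbrandQuotient (nsmulAddMonoidHom n : f.range →+ f.range) (a / d) :=
  ha.right_of_exact f.ker.subtype_injective f.rangeRestrict_surjective
    (f.ker_rangeRestrict.trans f.ker.range_subtype.symm)
    (AddMonoidHom.ext fun _ => rfl) (AddMonoidHom.ext fun x => map_nsmul f.rangeRestrict n x) hd

end HasHerbrandQuotient

lemma coe_pow_apply_of_restrict {K : AddSubgroup A} {f : AddMonoid.End A} {g : AddMonoid.End K}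
    (h : ∀ x, (g x : A) = f x) (i : ℕ) (x : K) : ((g ^ i) x : A) = (f ^ i) x := by
  induction i generalizing x with
  | zero => rfl
  | succ i ih => exact (ih (g x)).trans (congrArg (f ^ i) (h x))

lemma coe_geom_sum_apply_of_restrict {K : AddSubgroup A} {f : AddMonoid.End A}
    {g : AddMonoid.End K} (h : ∀ x, (g x : A) = f x) (n : ℕ) (x : K) :
    (((∑ i ∈ Finset.range n, g ^ i : AddMonoid.End K) x : K) : A) =
      (∑ i ∈ Finset.range n, f ^ i : AddMonoid.End A) x :=
  calc (((∑ i ∈ Finset.range n, g ^ i : AddMonoid.End K) x : K) : A)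
      = ((∑ i ∈ Finset.range n, (g ^ i) x : K) : A) :=
        congrArg Subtype.val (AddMonoidHom.finsetSum_apply _ _ _)
    _ = ∑ i ∈ Finset.range n, (f ^ i) x := by
        simp only [AddSubgroup.val_finsetSum, coe_pow_apply_of_restrict h]
    _ = (∑ i ∈ Finset.range n, f ^ i : AddMonoid.End A) x :=
        (AddMonoidHom.finsetSum_apply _ _ _).symm

lemma index_range_of_restrict {K : AddSubgroup A} {f : A →+ A} {g : K →+ K}
    (h : ∀ x, (g x : A) = f x) : g.range.index = (K.map f).relIndex K := by
  have hmap : K.map f = g.range.map K.subtype := by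
    rw [← AddMonoidHom.range_comp, (AddMonoidHom.ext h : K.subtype.comp g = f.comp K.subtype),
      AddMonoidHom.range_comp, AddSubgroup.range_subtype]
  have hrel := relIndex_map_range K.subtype g.range
  rwa [← hmap, AddSubgroup.range_subtype, AddSubgroup.ker_subtype, sup_bot_eq, eq_comm] at hrel

lemma card_ker_of_restrict {K : AddSubgroup A} {f : A →+ A} {g : K →+ K}
    (h : ∀ x, (g x : A) = f x) : Nat.card g.ker = Nat.card (K ⊓ f.ker : AddSubgroup A) := by
  have hker : g.ker = f.ker.comap K.subtype := by
    ext x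
    rw [AddMonoidHom.mem_ker, AddSubgroup.mem_comap, AddMonoidHom.mem_ker, AddSubgroup.coe_subtype,
      ← h, ZeroMemClass.coe_eq_zero]
  rw [← AddSubgroup.card_map_of_injective (K := g.ker) K.subtype_injective, hker,
    AddSubgroup.map_comap_eq, AddSubgroup.range_subtype]

lemma HasHerbrandQuotient.eq_mul_relIndex {s N : A →+ A} {fD : s.ker →+ s.ker}
    {fB : s.range →+ s.range} {b d : ℚ} (hNs : N.ker = s.range) (hsN : N.range ≤ s.ker)
    (hD : ∀ x, (fD x : A) = N x) (hB : ∀ x, (fB x : A) = s x)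
    (hd : HasHerbrandQuotient fD d) (hb : HasHerbrandQuotient fB b) :
    d = b * N.range.relIndex s.ker := by
  have hi : fD.range.index = fB.range.index * N.range.relIndex s.ker := by
    rw [index_range_of_restrict hD, index_range_of_restrict hB,
      ← AddSubgroup.relIndex_mul_relIndex _ _ _ (AddSubgroup.map_le_range N _) hsN,
      relIndex_map_range, relIndex_map_range, hNs, sup_comm]
  have hk : Nat.card fD.ker = Nat.card fB.ker := by
    rw [card_ker_of_restrict hD, card_ker_of_restrict hB, hNs, inf_comm]
  have hq := hd.index_range_eq
  rw [hi, hk, Nat.cast_mul, hb.index_range_eq] at hq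
  refine mul_right_cancel₀ (Nat.cast_ne_zero.2 hb.card_ker_ne_zero) ?_
  rw [← hq]
  ring

lemma geom_sum_apply_of_mem_ker {σ : AddMonoid.End A} {x : A} (n : ℕ)
    (hx : x ∈ AddMonoidHom.ker (1 - σ : AddMonoid.End A)) :
    (∑ i ∈ Finset.range n, σ ^ i : AddMonoid.End A) x = n • x := by
  have hσx : ∀ i, (σ ^ i) x = x := by
    intro i
    induction i with
    | zero => rfl
    | succ i ih => exact (congrArg (σ ^ i) (sub_eq_zero.1 hx).symm).trans ih
  calc (∑ i ∈ Finset.range n, σ ^ i : AddMonoid.End A) x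
      = ∑ i ∈ Finset.range n, (σ ^ i) x := AddMonoidHom.finsetSum_apply _ _ _
    _ = n • x := by simp only [hσx, Finset.sum_const, Finset.card_range]

lemma exists_restrict_range_one_sub {σ : AddMonoid.End A} {n : ℕ} (hσ : σ ^ n = 1) :
    ∃ τ : AddMonoid.End (AddMonoidHom.range (1 - σ : AddMonoid.End A)),
      (∀ x, (τ x : A) = σ x) ∧ ∑ i ∈ Finset.range n, τ ^ i = 0 := by
  have hmem (x : AddMonoidHom.range (1 - σ : AddMonoid.End A)) :
      σ x ∈ AddMonoidHom.range (1 - σ : AddMonoid.End A) := by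
    obtain ⟨_, y, rfl⟩ := x
    exact ⟨σ y, DFunLike.congr_fun ((Commute.one_left σ).sub_left (Commute.refl σ)) y⟩
  let τ : AddMonoid.End (AddMonoidHom.range (1 - σ : AddMonoid.End A)) :=
    (AddMonoidHom.comp σ (AddSubgroup.subtype _)).codRestrict _ hmem
  have hτ (x) : (τ x : A) = σ x := rfl
  refine ⟨τ, hτ, AddMonoidHom.ext fun x => Subtype.ext ?_⟩
  obtain ⟨y, hy⟩ := x.2
  calc (((∑ i ∈ Finset.range n, τ ^ i : AddMonoid.End _) x : AddMonoidHom.range _) : A)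
      = (∑ i ∈ Finset.range n, σ ^ i : AddMonoid.End A) x := coe_geom_sum_apply_of_restrict hτ n x
    _ = ((∑ i ∈ Finset.range n, σ ^ i) * (1 - σ) : AddMonoid.End A) y :=
        congrArg (∑ i ∈ Finset.range n, σ ^ i : AddMonoid.End A) hy.symm
    _ = 0 := by rw [geom_sum_mul_neg, hσ, sub_self]; rfl

/-- Chevalley's computation of the Herbrand quotient of a cyclic group of prime order. -/
theorem relIndex_range_geom_sum_pow_mul {σ : AddMonoid.End A} {a d : ℚ} (hσ : σ ^ p = 1)
    (h90 : AddMonoidHom.ker (∑ i ∈ Finset.range p, σ ^ i : AddMonoid.End A) ≤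
      AddMonoidHom.range (1 - σ : AddMonoid.End A))
    (ha : HasHerbrandQuotient (nsmulAddMonoidHom p : A →+ A) a)
    (hd : HasHerbrandQuotient
      (nsmulAddMonoidHom p : AddMonoidHom.ker (1 - σ : AddMonoid.End A) →+ _) d) :
    ((AddMonoidHom.range (∑ i ∈ Finset.range p, σ ^ i : AddMonoid.End A)).relIndex
      (AddMonoidHom.ker (1 - σ : AddMonoid.End A)) : ℚ) ^ (p - 1) * a = d ^ p := by
  set s : AddMonoid.End A := 1 - σ
  set N : AddMonoid.End A := ∑ i ∈ Finset.range p, σ ^ i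
  have hsN : AddMonoidHom.range N ≤ AddMonoidHom.ker s := by
    rintro _ ⟨x, rfl⟩
    change (s * N) x = 0
    rw [mul_neg_geom_sum, hσ, sub_self]; rfl
  have hNs : AddMonoidHom.ker N = AddMonoidHom.range s := by
    refine h90.antisymm ?_
    rintro _ ⟨x, rfl⟩
    change (N * s) x = 0
    rw [geom_sum_mul_neg, hσ, sub_self]; rfl
  have hrange : HasHerbrandQuotient (nsmulAddMonoidHom p : AddMonoidHom.range s →+ _) (a / d) :=
    ha.nsmul_range s hd
  obtain ⟨τ, hτσ, hτ⟩ := exists_restrict_range_one_sub hσ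
  obtain ⟨c, hc, hca⟩ := hrange.exists_one_sub_of_geom_sum_eq_zero hτ
  have hdc : d = c * (AddMonoidHom.range N).relIndex (AddMonoidHom.ker s) :=
    hd.eq_mul_relIndex hNs hsN (fun x => (geom_sum_apply_of_mem_ker p x.2).symm)
      (fun x => congrArg ((x : A) - ·) (hτσ x)) hc
  have hd₀ := hd.pos.ne'
  calc ((AddMonoidHom.range N).relIndex (AddMonoidHom.ker s) : ℚ) ^ (p - 1) * a
      = (c * (AddMonoidHom.range N).relIndex (AddMonoidHom.ker s)) ^ (p - 1) * d := by
        rw [mul_pow, hca]; field_simp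
    _ = d ^ p := by rw [← hdc, pow_sub_one_mul hp.out.ne_zero]

end PrimeOrder

/-! ### Units of local fields -/

section Multiplication

variable {A C : Type*} [AddCommGroup A] [AddCommGroup C] {n : ℕ}

lemma map_nsmulAddMonoidHom (f : A →+ C) (n : ℕ) :
    (nsmulAddMonoidHom n : C →+ C).comp f = f.comp (nsmulAddMonoidHom n) :=
  AddMonoidHom.ext fun x => (map_nsmul f n x).symm

lemma index_range_nsmulAddMonoidHom (H : AddSubgroup A) (n : ℕ) :
    (nsmulAddMonoidHom n : H →+ H).range.index =
      (H.map (nsmulAddMonoidHom n)).relIndex H := by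
  have h : (H.map (nsmulAddMonoidHom n)).addSubgroupOf H =
      (nsmulAddMonoidHom n : H →+ H).range := by
    ext y
    constructor
    · rintro ⟨x, hx, hxy⟩
      exact ⟨⟨x, hx⟩, Subtype.ext hxy⟩
    · rintro ⟨x, rfl⟩
      exact ⟨x, x.2, rfl⟩
  rw [← h]
  rfl

lemma HasHerbrandQuotient.of_injective {f : A →+ A} (hf : Function.Injective f)
    (h : f.range.index ≠ 0) : HasHerbrandQuotient f f.range.index := by
  have hk : Nat.card f.ker = 1 := by rw [f.ker_eq_bot hf, AddSubgroup.card_bot]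
  exact ⟨h, hk ▸ one_ne_zero, by rw [hk, Nat.cast_one, mul_one]⟩

lemma HasHerbrandQuotient.index_range_eq_of_injective {f : A →+ A} {c : ℚ}
    (h : HasHerbrandQuotient f c) (hf : Function.Injective f) : (f.range.index : ℚ) = c :=
  (HasHerbrandQuotient.of_injective hf h.index_range_ne_zero).unique h

lemma hasHerbrandQuotient_nsmul_int (hn : n ≠ 0) :
    HasHerbrandQuotient (nsmulAddMonoidHom n : ℤ →+ ℤ) n := by
  have hr : (nsmulAddMonoidHom n : ℤ →+ ℤ).range = AddSubgroup.zmultiples (n : ℤ) := by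
    ext y
    rw [Int.mem_zmultiples_iff, dvd_def]
    exact exists_congr fun x => by rw [nsmulAddMonoidHom_apply, nsmul_eq_mul, eq_comm]
  have hi : (nsmulAddMonoidHom n : ℤ →+ ℤ).range.index = n := by
    rw [hr, Int.index_zmultiples, Int.natAbs_natCast]
  have h := HasHerbrandQuotient.of_injective (f := (nsmulAddMonoidHom n : ℤ →+ ℤ))
    (nsmul_right_injective hn) (hi.symm ▸ hn)
  rwa [hi] at h

lemma index_ne_zero_of_isOpen_of_isCompact [TopologicalSpace A] [SeparatelyContinuousAdd A]
    {H : AddSubgroup A} (hH : IsOpen (H : Set A)) {K : Set A} (hK : IsCompact K)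
    (h : ∀ a, ∃ k ∈ K, -k + a ∈ H) : H.index ≠ 0 := by
  have := QuotientAddGroup.discreteTopology hH
  have hfin := (hK.image (QuotientAddGroup.continuous_mk (N := H))).finite_of_discrete
  have huniv : (QuotientAddGroup.mk : A → A ⧸ H) '' K = Set.univ := by
    refine Set.eq_univ_of_forall fun y => ?_
    obtain ⟨a, rfl⟩ := QuotientAddGroup.mk_surjective y
    obtain ⟨k, hk, hka⟩ := h a
    exact ⟨k, hk, QuotientAddGroup.eq.2 hka⟩
  have : Finite (A ⧸ H) := Set.finite_univ_iff.1 (huniv ▸ hfin)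
  exact AddSubgroup.index_ne_zero_of_finite

end Multiplication

section Lattice

variable {ℓ : ℕ} [Fact ℓ.Prime]

lemma exists_hasHerbrandQuotient_nsmul_padicInt {n : ℕ} (hn : n ≠ 0) :
    ∃ c, HasHerbrandQuotient (nsmulAddMonoidHom n : ℤ_[ℓ] →+ ℤ_[ℓ]) c := by
  have hcomp : ((↑) : ℤ_[ℓ] → ℚ_[ℓ]) ∘ (nsmulAddMonoidHom n : ℤ_[ℓ] →+ ℤ_[ℓ]) =
      Homeomorph.mulLeft₀ (n : ℚ_[ℓ]) (Nat.cast_ne_zero.2 hn) ∘ ((↑) : ℤ_[ℓ] → ℚ_[ℓ]) :=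
    funext fun x => by
      change ((n • x : ℤ_[ℓ]) : ℚ_[ℓ]) = n * x
      rw [nsmul_eq_mul, PadicInt.coe_mul, PadicInt.coe_natCast]
  have hopen : IsOpen ((nsmulAddMonoidHom n : ℤ_[ℓ] →+ ℤ_[ℓ]).range : Set ℤ_[ℓ]) := by
    refine ((Topology.IsOpenEmbedding.of_comp_iff _ PadicInt.isOpenEmbedding_coe).1
      ?_).isOpen_range
    rw [hcomp]
    exact (Homeomorph.isOpenEmbedding _).comp PadicInt.isOpenEmbedding_coe
  exact ⟨_, .of_injective (nsmul_right_injective hn) (index_ne_zero_of_isOpen_of_isCompact hopen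
    isCompact_univ fun a => ⟨a, Set.mem_univ a, by simp⟩)⟩

lemma exists_isOpenEmbedding_pi_padicInt (F : Type*) [NormedAddCommGroup F]
    [NormedSpace ℚ_[ℓ] F] [FiniteDimensional ℚ_[ℓ] F] {r : ℝ} (hr : 0 < r) :
    ∃ ι : (Fin (Module.finrank ℚ_[ℓ] F) → ℤ_[ℓ]) →+ F,
      Topology.IsOpenEmbedding ι ∧ ∀ a, ‖ι a‖ ≤ r := by
  let e : (Fin (Module.finrank ℚ_[ℓ] F) → ℚ_[ℓ]) ≃L[ℚ_[ℓ]] F :=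
    (Module.finBasis ℚ_[ℓ] F).equivFunL.symm
  let M := ‖e.toContinuousLinearMap‖
  obtain ⟨s, hs0, hs⟩ := NormedField.exists_norm_lt ℚ_[ℓ]
    (show 0 < r / (M + 1) by positivity)
  let i : (Fin (Module.finrank ℚ_[ℓ] F) → ℤ_[ℓ]) →+ (Fin (Module.finrank ℚ_[ℓ] F) → ℚ_[ℓ]) :=
    AddMonoidHom.compLeft PadicInt.Coe.ringHom.toAddMonoidHom _
  have hi : Topology.IsOpenEmbedding i := .piMap fun _ => PadicInt.isOpenEmbedding_coe
  let m : F ≃ₜ F := Homeomorph.smulOfNeZero s (norm_pos_iff.1 hs0)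
  refine ⟨((DistribSMul.toAddMonoidHom F s).comp (e : _ →+ F)).comp i,
    m.isOpenEmbedding.comp (e.toHomeomorph.isOpenEmbedding.comp hi), fun a => ?_⟩
  have ha : ‖i a‖ ≤ 1 := (pi_norm_le_iff_of_nonneg zero_le_one).2 fun j => (a j).2
  calc ‖s • e (i a)‖ ≤ r / (M + 1) * (M * 1) := by
        rw [norm_smul]
        gcongr
        exact e.toContinuousLinearMap.le_opNorm_of_le ha
    _ ≤ r := by
        rw [div_mul_eq_mul_div, div_le_iff₀ (by positivity)]
        nlinarith

lemma hasHerbrandQuotient_nsmul_closedBall {F : Type*} [NormedAddCommGroup F]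
    [IsUltrametricDist F] [NormedSpace ℚ_[ℓ] F] [FiniteDimensional ℚ_[ℓ] F] {r : ℝ} (hr : 0 < r)
    {n : ℕ} {c : ℚ} (hc : HasHerbrandQuotient (nsmulAddMonoidHom n : ℤ_[ℓ] →+ ℤ_[ℓ]) c) :
    HasHerbrandQuotient
      (nsmulAddMonoidHom n : IsUltrametricDist.closedBall_openAddSubgroup F hr →+ _)
      (c ^ Module.finrank ℚ_[ℓ] F) := by
  have : ProperSpace F := FiniteDimensional.proper ℚ_[ℓ] F
  have : CompactSpace (IsUltrametricDist.closedBall_openAddSubgroup F hr) :=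
    isCompact_iff_compactSpace.1 (isCompact_closedBall (0 : F) r)
  obtain ⟨ι, hι, hr'⟩ := exists_isOpenEmbedding_pi_padicInt (ℓ := ℓ) F hr
  have hmem : ∀ a, ι a ∈ IsUltrametricDist.closedBall_openAddSubgroup F hr := fun a =>
    mem_closedBall_zero_iff.2 (hr' a)
  let j := ι.codRestrict _ hmem
  have hj : Function.Injective j := fun a b hab => hι.injective (congrArg Subtype.val hab)
  have hopen : IsOpen (j.range : Set (IsUltrametricDist.closedBall_openAddSubgroup F hr)) :=
    (hι.isOpenMap.codRestrict hmem).isOpen_range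
  refine .of_injective_of_index_ne_zero hj (index_ne_zero_of_isOpen_of_isCompact hopen
    isCompact_univ fun a => ⟨a, Set.mem_univ a, by simp⟩) (map_nsmulAddMonoidHom j n) ?_
  have h := hc.pi (ι := Fin (Module.finrank ℚ_[ℓ] F))
  rwa [Fintype.card_fin] at h

end Lattice

lemma isCompact_setOf_norm_units_mem_Icc (F : Type*) [NormedField F] [ProperSpace F] {r : ℝ}
    (hr₀ : 0 < r) (s : ℝ) :
    IsCompact {u : Fˣ | ‖(u : F)‖ ∈ Set.Icc r s} := by
  have h : Units.val '' {u : Fˣ | ‖(u : F)‖ ∈ Set.Icc r s} = {x : F | ‖x‖ ∈ Set.Icc r s} := by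
    ext x
    refine ⟨?_, fun hx => ⟨Units.mk0 x (norm_pos_iff.1 (hr₀.trans_le hx.1)), hx, rfl⟩⟩
    rintro ⟨u, hu, rfl⟩
    exact hu
  rw [Units.isEmbedding_val₀.isCompact_iff, h]
  exact (isCompact_closedBall 0 s).of_isClosed_subset (isClosed_Icc.preimage continuous_norm)
    fun x hx => mem_closedBall_zero_iff.2 hx.2

section UnitClosedBall

open Metric IsUltrametricDist

variable {F : Type*} [NormedField F] [IsUltrametricDist F] {r s : ℝ} {n : ℕ} {x y z : F}

lemma norm_eq_one_of_mem_closedBall (hr : r < 1) (hx : x ∈ closedBall 1 r) : ‖x‖ = 1 := by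
  rw [mem_closedBall_iff_norm] at hx
  have h := norm_add_eq_max_of_norm_ne_norm (x := x - 1) (y := 1)
    (by rw [norm_one]; exact (hx.trans_lt hr).ne)
  rwa [sub_add_cancel, norm_one, max_eq_right (hx.trans hr.le)] at h

lemma mul_mem_closedBall_one (hx₁ : ‖x‖ = 1) (hx : x ∈ closedBall 1 r) (hy : y ∈ closedBall 1 r) :
    x * y ∈ closedBall 1 r := by
  have h : x * y - 1 = x * (y - 1) + (x - 1) := by ring
  rw [mem_closedBall_iff_norm, h]
  refine (norm_add_le_max _ _).trans (max_le ?_ (mem_closedBall_iff_norm.1 hx))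
  rw [norm_mul, hx₁, one_mul]
  exact mem_closedBall_iff_norm.1 hy

lemma pow_mem_closedBall_one (hr : r < 1) (hx : x ∈ closedBall 1 r) (n : ℕ) :
    x ^ n ∈ closedBall 1 r := by
  induction n with
  | zero => simpa using dist_nonneg.trans hx
  | succ n ih =>
    exact pow_succ x n ▸ mul_mem_closedBall_one (norm_eq_one_of_mem_closedBall hr ih) ih hx

lemma norm_pow_sub_pow_sub_le (hr : r < 1) (hx : x ∈ closedBall 1 r) (hy : y ∈ closedBall 1 r)
    (n : ℕ) : ‖x ^ n - y ^ n - n * (x - y)‖ ≤ r * ‖x - y‖ := by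
  have hr₀ : 0 ≤ r := dist_nonneg.trans hx
  have h : x ^ n - y ^ n - n * (x - y) =
      (∑ i ∈ Finset.range n, (x ^ i * y ^ (n - 1 - i) - 1)) * (x - y) := by
    rw [Finset.sum_sub_distrib, sub_mul, (Commute.all x y).geom_sum₂_mul]
    simp
  rw [h, norm_mul]
  gcongr
  refine norm_sum_le_of_forall_le_of_nonneg hr₀ fun i _ => mem_closedBall_iff_norm.1 ?_
  have hi := pow_mem_closedBall_one hr hx i
  exact mul_mem_closedBall_one (norm_eq_one_of_mem_closedBall hr hi) hi
    (pow_mem_closedBall_one hr hy _)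

lemma norm_pow_sub_pow (hr : r < 1) (hn : r < ‖(n : F)‖) (hx : x ∈ closedBall 1 r)
    (hy : y ∈ closedBall 1 r) : ‖x ^ n - y ^ n‖ = ‖(n : F)‖ * ‖x - y‖ := by
  rcases eq_or_ne x y with rfl | hxy
  · simp
  · have hlt : ‖x ^ n - y ^ n - n * (x - y)‖ < ‖n * (x - y)‖ := by
      rw [norm_mul]
      exact (norm_pow_sub_pow_sub_le hr hx hy n).trans_lt
        (mul_lt_mul_of_pos_right hn (norm_pos_iff.2 (sub_ne_zero.2 hxy)))
    have h := norm_add_eq_max_of_norm_ne_norm hlt.ne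
    rwa [sub_add_cancel, max_eq_right hlt.le, norm_mul] at h

/-- The root is the fixed point of the Newton iteration with constant slope `n`. -/
lemma exists_pow_eq_of_mem_closedBall [CompleteSpace F] (hr₀ : 0 ≤ r) (hr : r < 1)
    (hn : r < ‖(n : F)‖) (hz : z ∈ closedBall 1 (‖(n : F)‖ * r)) :
    ∃ x ∈ closedBall (1 : F) r, x ^ n = z := by
  have hn₀ : 0 < ‖(n : F)‖ := hr₀.trans_lt hn
  have hn' : (n : F) ≠ 0 := norm_pos_iff.1 hn₀
  have h1 : (1 : F) ∈ closedBall 1 r := mem_closedBall_self hr₀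
  let K : NNReal := ⟨r / ‖(n : F)‖, by positivity⟩
  have hK : K < 1 := (div_lt_one hn₀).2 hn
  let T : F → F := fun x => x - (x ^ n - z) / n
  have hT : LipschitzOnWith K T (closedBall 1 r) := .of_dist_le_mul fun x hx y hy => by
    have h : T x - T y = -((x ^ n - y ^ n - n * (x - y)) / n) := by
      simp only [T]
      field_simp
      ring
    rw [dist_eq_norm, h, norm_neg, norm_div, dist_eq_norm]
    change _ ≤ r / ‖(n : F)‖ * ‖x - y‖
    rw [div_mul_eq_mul_div]
    gcongr
    exact norm_pow_sub_pow_sub_le hr hx hy n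
  have hT1 : T 1 ∈ closedBall 1 r := by
    have h : T 1 - 1 = (z - 1) / n := by simp only [T, one_pow]; ring
    rw [mem_closedBall_iff_norm, h, norm_div, div_le_iff₀' hn₀]
    exact mem_closedBall_iff_norm.1 hz
  have hmaps : Set.MapsTo T (closedBall 1 r) (closedBall 1 r) := fun x hx => by
    refine (IsUltrametricDist.dist_triangle_max _ (T 1) _).trans
      (max_le ((hT.dist_le_mul x hx 1 h1).trans ?_) hT1)
    exact (mul_le_of_le_one_left dist_nonneg (NNReal.coe_le_one.2 hK.le)).trans hx
  obtain ⟨x, hx, hfix, -⟩ := ContractingWith.exists_fixedPoint' isClosed_closedBall.isComplete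
    hmaps ⟨hK, hT.mapsToRestrict hmaps⟩ h1 (edist_ne_top _ _)
  have h : (x ^ n - z) / n = 0 := sub_eq_self.1 hfix
  exact ⟨x, hx, sub_eq_zero.1 ((div_eq_zero_iff.1 h).resolve_right hn')⟩

variable (F) in
/-- The open subgroup of `Fˣ` formed by the closed ball of radius `r` around `1`. The first
condition follows from the second if `r < 1`, and makes this a group for every `r`. -/
def unitClosedBall (hr : 0 < r) : OpenSubgroup Fˣ where
  carrier := {u | ‖(u : F)‖ = 1 ∧ (u : F) ∈ closedBall 1 r}
  one_mem' := ⟨norm_one, mem_closedBall_self hr.le⟩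
  mul_mem' ha hb :=
    ⟨by rw [Units.val_mul, norm_mul, ha.1, hb.1, one_mul], mul_mem_closedBall_one ha.1 ha.2 hb.2⟩
  inv_mem' {a} ha := by
    refine ⟨by rw [Units.val_inv_eq_inv_val, norm_inv, ha.1, inv_one], ?_⟩
    have h : ((a⁻¹ : Fˣ) : F) - 1 = (a : F)⁻¹ * (1 - a) := by
      rw [Units.val_inv_eq_inv_val, mul_sub, inv_mul_cancel₀ a.ne_zero, mul_one]
    rw [mem_closedBall_iff_norm, h, norm_mul, norm_inv, ha.1, inv_one, one_mul, norm_sub_rev]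
    exact mem_closedBall_iff_norm.1 ha.2
  isOpen' := by
    have h : IsOpen (sphere (0 : F) 1 ∩ closedBall 1 r) :=
      (isOpen_sphere 0 one_ne_zero).inter (isOpen_closedBall 1 hr.ne')
    convert h.preimage Units.continuous_val using 1
    ext u
    simp

lemma mem_unitClosedBall (hr₀ : 0 < r) (hr : r < 1) {u : Fˣ} :
    u ∈ unitClosedBall F hr₀ ↔ (u : F) ∈ closedBall 1 r :=
  ⟨And.right, fun h => ⟨norm_eq_one_of_mem_closedBall hr h, h⟩⟩

lemma exists_mem_unitClosedBall (hr₀ : 0 < r) (hr : r < 1) (hx : x ∈ closedBall 1 r) :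
    ∃ u ∈ unitClosedBall F hr₀, (u : F) = x :=
  have hx₀ : x ≠ 0 := norm_pos_iff.1 (norm_eq_one_of_mem_closedBall hr hx ▸ one_pos)
  ⟨Units.mk0 x hx₀, (mem_unitClosedBall hr₀ hr).2 hx, rfl⟩

variable (F) in
/-- `unitClosedBall`, written additively. -/
abbrev addUnitClosedBall (hr : 0 < r) : AddSubgroup (Additive Fˣ) :=
  Subgroup.toAddSubgroup (unitClosedBall F hr)

/-- `u ↦ u - 1` is additive on the ball of radius `r` modulo the ball of radius `s ≥ r ^ 2`. -/
lemma relIndex_addUnitClosedBall (hr₀ : 0 < r) (hr : r < 1) (hs₀ : 0 < s) (hsr : s < 1)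
    (hrs : r ^ 2 ≤ s) :
    (addUnitClosedBall F hs₀).relIndex (addUnitClosedBall F hr₀) =
      (closedBall_openAddSubgroup F hs₀ : AddSubgroup F).relIndex
        (closedBall_openAddSubgroup F hr₀) := by
  let B : AddSubgroup F := closedBall_openAddSubgroup F hs₀
  let g (u : addUnitClosedBall F hr₀) : F := (u.1.toMul : F) - 1
  have hg : ∀ u, ‖g u‖ ≤ r := fun u => mem_closedBall_iff_norm.1 u.2.2
  let f : addUnitClosedBall F hr₀ →+ F ⧸ B := .mk' (fun u => (g u : F ⧸ B)) fun u v => by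
    have h : -g (u + v) + (g u + g v) = -(g u * g v) := by
      change -((u.1.toMul : F) * v.1.toMul - 1) + _ = _
      ring
    rw [← QuotientAddGroup.mk_add, QuotientAddGroup.eq, h]
    refine mem_closedBall_zero_iff.2 ?_
    rw [norm_neg, norm_mul]
    nlinarith [hg u, hg v, norm_nonneg (g u), norm_nonneg (g v)]
  have hker : f.ker = (addUnitClosedBall F hs₀).addSubgroupOf (addUnitClosedBall F hr₀) := by
    ext u
    rw [AddMonoidHom.mem_ker, AddSubgroup.mem_addSubgroupOf]
    refine (QuotientAddGroup.eq_zero_iff _).trans (mem_closedBall_zero_iff.trans ?_)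
    exact mem_closedBall_iff_norm.symm.trans (mem_unitClosedBall hs₀ hsr).symm
  have hrange : f.range = AddSubgroup.map (QuotientAddGroup.mk' B)
      (closedBall_openAddSubgroup F hr₀) := by
    ext y
    constructor
    · rintro ⟨u, rfl⟩
      exact ⟨g u, mem_closedBall_zero_iff.2 (hg u), rfl⟩
    · rintro ⟨x, hx, rfl⟩
      have hx' : x + 1 ∈ closedBall 1 r := by
        rw [mem_closedBall_iff_norm, add_sub_cancel_right]
        exact mem_closedBall_zero_iff.1 hx
      obtain ⟨u, hu, hux⟩ := exists_mem_unitClosedBall hr₀ hr hx'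
      exact ⟨⟨Additive.ofMul u, hu⟩, congrArg _ (show (u : F) - 1 = x by rw [hux]; ring)⟩
  rw [AddSubgroup.relIndex, ← hker, AddSubgroup.index_ker, hrange, ← AddSubgroup.relIndex_ker,
    QuotientAddGroup.ker_mk']

lemma map_nsmul_addUnitClosedBall [CompleteSpace F] (hr₀ : 0 < r) (hr : r < 1)
    (hn : r < ‖(n : F)‖) (hs₀ : 0 < ‖(n : F)‖ * r) (hs : ‖(n : F)‖ * r < 1) :
    (addUnitClosedBall F hr₀).map (nsmulAddMonoidHom n) = addUnitClosedBall F hs₀ := by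
  ext u
  constructor
  · rintro ⟨v, hv, rfl⟩
    have h := norm_pow_sub_pow hr hn hv.2 (mem_closedBall_self hr₀.le)
    refine (mem_unitClosedBall hs₀ hs).2 (mem_closedBall_iff_norm.2 ?_)
    change ‖(v.toMul : F) ^ n - 1‖ ≤ _
    rw [one_pow] at h
    rw [h]
    gcongr
    exact mem_closedBall_iff_norm.1 hv.2
  · intro hu
    obtain ⟨x, hx, hxu⟩ := exists_pow_eq_of_mem_closedBall hr₀.le hr hn hu.2
    obtain ⟨v, hv, rfl⟩ := exists_mem_unitClosedBall hr₀ hr hx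
    exact ⟨Additive.ofMul v, hv, Units.ext hxu⟩

lemma map_nsmul_closedBall_openAddSubgroup (hr₀ : 0 < r) (hs₀ : 0 < ‖(n : F)‖ * r) :
    AddSubgroup.map (nsmulAddMonoidHom n) (closedBall_openAddSubgroup F hr₀) =
      (closedBall_openAddSubgroup F hs₀ : AddSubgroup F) := by
  have hn₀ : 0 < ‖(n : F)‖ := pos_of_mul_pos_left hs₀ hr₀.le
  have hn : (n : F) ≠ 0 := norm_pos_iff.1 hn₀
  ext y
  constructor
  · rintro ⟨x, hx, rfl⟩
    refine mem_closedBall_zero_iff.2 ?_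
    rw [nsmulAddMonoidHom_apply, nsmul_eq_mul, norm_mul]
    gcongr
    exact mem_closedBall_zero_iff.1 hx
  · intro hy
    refine ⟨y / n, mem_closedBall_zero_iff.2 ?_, ?_⟩
    · rw [norm_div, div_le_iff₀' hn₀]
      exact mem_closedBall_zero_iff.1 hy
    · rw [nsmulAddMonoidHom_apply, nsmul_eq_mul, mul_div_cancel₀ _ hn]

lemma nsmul_addUnitClosedBall_injective (hr₀ : 0 < r) (hr : r < 1) (hn : r < ‖(n : F)‖) :
    Function.Injective (nsmulAddMonoidHom n : addUnitClosedBall F hr₀ →+ _) := fun u v huv => by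
  have h := norm_pow_sub_pow hr hn u.2.2 v.2.2
  have huv' : (u.1.toMul : F) ^ n = (v.1.toMul : F) ^ n :=
    congrArg (fun w : addUnitClosedBall F hr₀ => (w.1.toMul : F)) huv
  rw [huv', sub_self, norm_zero, eq_comm, mul_eq_zero, norm_eq_zero] at h
  exact Subtype.ext (Units.ext (sub_eq_zero.1 (norm_eq_zero.1
    (h.resolve_left (norm_pos_iff.1 (hr₀.trans hn))))))

lemma HasHerbrandQuotient.nsmul_addUnitClosedBall [CompleteSpace F] (hr₀ : 0 < r) (hr : r < 1)
    (hn : r < ‖(n : F)‖) (hn₁ : ‖(n : F)‖ ≤ 1) {c : ℚ} (hc : HasHerbrandQuotient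
      (nsmulAddMonoidHom n : closedBall_openAddSubgroup F hr₀ →+ _) c) :
    HasHerbrandQuotient (nsmulAddMonoidHom n : addUnitClosedBall F hr₀ →+ _) c := by
  have hn₀ : 0 < ‖(n : F)‖ := hr₀.trans hn
  have hs₀ : 0 < ‖(n : F)‖ * r := mul_pos hn₀ hr₀
  have hs : ‖(n : F)‖ * r < 1 := mul_lt_one_of_nonneg_of_lt_one_right hn₁ hr₀.le hr
  have hinj : Function.Injective
      (nsmulAddMonoidHom n : closedBall_openAddSubgroup F hr₀ →+ _) := fun x y hxy => by
    have h : n • (x : F) = n • (y : F) := congrArg Subtype.val hxy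
    rw [nsmul_eq_mul, nsmul_eq_mul] at h
    exact Subtype.ext (mul_left_cancel₀ (norm_pos_iff.1 hn₀) h)
  have hi : (nsmulAddMonoidHom n : addUnitClosedBall F hr₀ →+ _).range.index =
      (nsmulAddMonoidHom n : closedBall_openAddSubgroup F hr₀ →+ _).range.index := by
    rw [index_range_nsmulAddMonoidHom, map_nsmul_addUnitClosedBall hr₀ hr hn hs₀ hs,
      relIndex_addUnitClosedBall hr₀ hr hs₀ hs (by nlinarith),
      ← map_nsmul_closedBall_openAddSubgroup hr₀ hs₀]
    exact (index_range_nsmulAddMonoidHom _ n).symm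
  rw [← hc.index_range_eq_of_injective hinj, ← hi]
  exact .of_injective (nsmul_addUnitClosedBall_injective hr₀ hr hn)
    (hi ▸ hc.index_range_ne_zero)

lemma HasHerbrandQuotient.nsmul_prod {A C : Type*} [AddCommGroup A] [AddCommGroup C] {a c : ℚ}
    (ha : HasHerbrandQuotient (nsmulAddMonoidHom n : A →+ A) a)
    (hc : HasHerbrandQuotient (nsmulAddMonoidHom n : C →+ C) c) :
    HasHerbrandQuotient (nsmulAddMonoidHom n : A × C →+ A × C) (a * c) :=
  have hker : (AddMonoidHom.snd A C).ker = (AddMonoidHom.inl A C).range :=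
    AddSubgroup.ext fun ⟨x, _⟩ =>
      ⟨fun h => ⟨x, Prod.ext rfl h.symm⟩, fun ⟨_, h⟩ => (congrArg Prod.snd h).symm⟩
  .of_exact (Prod.mk_left_injective 0) Prod.snd_surjective hker (map_nsmulAddMonoidHom _ n)
    (map_nsmulAddMonoidHom _ n).symm ha hc

variable {ϖ : Fˣ}

lemma coprod_addUnitClosedBall_zmultiples_injective (hr₀ : 0 < r) (hϖ : ‖(ϖ : F)‖ ≠ 1) :
    Function.Injective ((addUnitClosedBall F hr₀).subtype.coprod
      (zmultiplesHom (Additive Fˣ) (Additive.ofMul ϖ))) := by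
  rw [injective_iff_map_eq_zero]
  rintro ⟨v, z⟩ h
  have hvz : v.1.toMul * ϖ ^ z = 1 := h
  have hz : ‖(ϖ : F)‖ ^ z = ‖(ϖ : F)‖ ^ (0 : ℤ) := by
    have h₁ := congrArg (fun u : Fˣ => ‖(u : F)‖) hvz
    simp only [Units.val_mul, norm_mul, Units.val_zpow_eq_zpow_val, norm_zpow, Units.val_one,
      norm_one] at h₁
    rwa [show ‖(v.1.toMul : F)‖ = 1 from v.2.1, one_mul] at h₁
  obtain rfl : z = 0 := zpow_right_injective₀ (norm_pos_iff.2 ϖ.ne_zero) hϖ hz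
  rw [zpow_zero, mul_one] at hvz
  exact Prod.ext (Subtype.ext hvz) rfl

lemma index_range_coprod_addUnitClosedBall_zmultiples_ne_zero [ProperSpace F] (hr₀ : 0 < r)
    (hϖ : ‖(ϖ : F)‖ < 1) :
    ((addUnitClosedBall F hr₀).subtype.coprod
      (zmultiplesHom (Additive Fˣ) (Additive.ofMul ϖ))).range.index ≠ 0 := by
  have hϖ₀ : 0 < ‖(ϖ : F)‖ := norm_pos_iff.2 ϖ.ne_zero
  have hle : addUnitClosedBall F hr₀ ≤ ((addUnitClosedBall F hr₀).subtype.coprod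
      (zmultiplesHom (Additive Fˣ) (Additive.ofMul ϖ))).range := fun v hv =>
    ⟨(⟨v, hv⟩, 0), by simp⟩
  have hopen : IsOpen (addUnitClosedBall F hr₀ : Set (Additive Fˣ)) :=
    (unitClosedBall F hr₀).isOpen
  refine index_ne_zero_of_isOpen_of_isCompact (AddSubgroup.isOpen_mono hle hopen)
    ((isCompact_setOf_norm_units_mem_Icc F hϖ₀ 1).image continuous_ofMul) fun a => ?_
  obtain ⟨m, hm₁, hm₂⟩ := exists_mem_Ico_zpow (norm_pos_iff.2 a.toMul.ne_zero)
    ((one_lt_inv₀ hϖ₀).2 hϖ)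
  refine ⟨_, ⟨a.toMul * ϖ ^ (m + 1), ⟨?_, ?_⟩, rfl⟩, ⟨(0, -(m + 1)), ?_⟩⟩
  · rw [inv_zpow', zpow_neg, inv_le_iff_one_le_mul₀ (by positivity)] at hm₁
    rw [Units.val_mul, norm_mul, Units.val_zpow_eq_zpow_val, norm_zpow,
      zpow_add_one₀ hϖ₀.ne', ← mul_assoc]
    exact le_mul_of_one_le_left hϖ₀.le hm₁
  · rw [inv_zpow', zpow_neg, ← one_div, lt_div_iff₀ (by positivity)] at hm₂
    rw [Units.val_mul, norm_mul, Units.val_zpow_eq_zpow_val, norm_zpow]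
    exact hm₂.le
  · apply Additive.toMul.injective
    change 1 * ϖ ^ (-(m + 1)) = (a.toMul * ϖ ^ (m + 1))⁻¹ * a.toMul
    rw [zpow_neg, one_mul, mul_inv_rev, inv_mul_cancel_right]

end UnitClosedBall

theorem hasHerbrandQuotient_nsmul_units {ℓ : ℕ} [Fact ℓ.Prime] (F : Type*) [Field F]
    [Algebra ℚ_[ℓ] F] [FiniteDimensional ℚ_[ℓ] F] {n : ℕ} (hn : n ≠ 0) {c : ℚ}
    (hc : HasHerbrandQuotient (nsmulAddMonoidHom n : ℤ_[ℓ] →+ ℤ_[ℓ]) c) :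
    HasHerbrandQuotient (nsmulAddMonoidHom n : Additive Fˣ →+ _)
      (c ^ Module.finrank ℚ_[ℓ] F * n) := by
  let _ : NormedField F := spectralNorm.normedField ℚ_[ℓ] F
  let _ : NormedAlgebra ℚ_[ℓ] F := spectralNorm.normedAlgebra ℚ_[ℓ] F
  have : IsUltrametricDist F :=
    IsUltrametricDist.isUltrametricDist_of_isNonarchimedean_norm isNonarchimedean_spectralNorm
  have : ProperSpace F := FiniteDimensional.proper ℚ_[ℓ] F
  have hnorm : ∀ m : ℕ, ‖(m : F)‖ = ‖(m : ℚ_[ℓ])‖ := fun m => by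
    rw [← map_natCast (algebraMap ℚ_[ℓ] F) m, norm_algebraMap']
  have hn₀ : 0 < ‖(n : F)‖ := hnorm n ▸ norm_pos_iff.2 (Nat.cast_ne_zero.2 hn)
  have hn₁ : ‖(n : F)‖ ≤ 1 := hnorm n ▸ mod_cast Padic.norm_int_le_one (p := ℓ) (n : ℤ)
  have hℓ₀ : 0 < ‖(ℓ : F)‖ :=
    hnorm ℓ ▸ norm_pos_iff.2 (Nat.cast_ne_zero.2 (Fact.out : ℓ.Prime).ne_zero)
  have hℓ₁ : ‖(ℓ : F)‖ < 1 := hnorm ℓ ▸ Padic.norm_p_lt_one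
  let ϖ : Fˣ := Units.mk0 (ℓ : F) (norm_pos_iff.1 hℓ₀)
  obtain ⟨r, hr₀, hr⟩ := exists_between (lt_min one_pos hn₀)
  obtain ⟨hr₁, hrn⟩ := lt_min_iff.1 hr
  exact .of_injective_of_index_ne_zero
    (coprod_addUnitClosedBall_zmultiples_injective (ϖ := ϖ) hr₀ hℓ₁.ne)
    (index_range_coprod_addUnitClosedBall_zmultiples_ne_zero hr₀ hℓ₁) (map_nsmulAddMonoidHom _ n)
    (.nsmul_prod (.nsmul_addUnitClosedBall hr₀ hr₁ hrn hn₁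
      (hasHerbrandQuotient_nsmul_closedBall hr₀ hc)) (hasHerbrandQuotient_nsmul_int hn))

/-! ### Norm-compatible sequences in a tower of groups -/

section PartialNorm

open Finset

variable {M : Type*} [CommGroup M] {τ : MulAut M} {x : M}

/-- The endomorphism `1 + τ + ⋯ + τ ^ (N - 1)` of a commutative group, written multiplicatively.
It is the norm when `τ` generates a cyclic Galois group of order `N`. -/
def partialNorm (τ : MulAut M) (N : ℕ) : M →* M :=
  ∏ i ∈ range N, (τ ^ i).toMonoidHom

lemma partialNorm_apply (τ : MulAut M) (N : ℕ) (x : M) :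
    partialNorm τ N x = ∏ i ∈ range N, (τ ^ i) x := by
  simp [partialNorm, MonoidHom.finsetProd_apply]

lemma partialNorm_one_apply (τ : MulAut M) (x : M) : partialNorm τ 1 x = x := by
  simp [partialNorm_apply]

lemma map_partialNorm (σ : MulAut M) (hσ : Commute σ τ) (N : ℕ) (x : M) :
    σ (partialNorm τ N x) = partialNorm τ N (σ x) := by
  simp only [partialNorm_apply, map_prod, ← MulAut.mul_apply, (hσ.pow_right _).eq]

lemma partialNorm_comm {σ : MulAut M} (h : Commute σ τ) (a b : ℕ) (x : M) :
    partialNorm σ a (partialNorm τ b x) = partialNorm τ b (partialNorm σ a x) := by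
  simp only [partialNorm_apply σ, map_prod, map_partialNorm _ (h.pow_left _)]

lemma pow_apply_eq_self (hx : τ x = x) (i : ℕ) : (τ ^ i) x = x := by
  induction i with
  | zero => rfl
  | succ i ih => rw [pow_succ, MulAut.mul_apply, hx, ih]

lemma partialNorm_of_apply_eq_self (hx : τ x = x) (N : ℕ) : partialNorm τ N x = x ^ N := by
  simp [partialNorm_apply, pow_apply_eq_self hx]

lemma partialNorm_div_apply (τ : MulAut M) (N : ℕ) (x : M) :
    partialNorm τ N (x / τ x) = x / (τ ^ N) x := by
  simp only [partialNorm_apply, map_div, ← MulAut.mul_apply, ← pow_succ]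
  simpa using prod_range_div' (fun i => (τ ^ i) x) N

lemma pow_apply_eq_self_of_partialNorm {N : ℕ} (h : τ (partialNorm τ N x) = partialNorm τ N x) :
    (τ ^ N) x = x := by
  have h₁ := partialNorm_div_apply τ N x
  rwa [map_div, ← map_partialNorm τ (.refl τ), h, div_self', eq_comm, div_eq_one, eq_comm] at h₁

lemma partialNorm_mul_apply (τ : MulAut M) (a b : ℕ) (x : M) :
    partialNorm τ (a * b) x = partialNorm τ a (partialNorm (τ ^ a) b x) := by
  induction b with
  | zero => simp [partialNorm_apply]
  | succ b ih =>
    have h : ∀ c : ℕ, partialNorm (τ ^ a) (c + 1) x = partialNorm (τ ^ a) c x * ((τ ^ a) ^ c) x :=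
      fun c => by rw [partialNorm_apply, prod_range_succ, partialNorm_apply]
    rw [h, map_mul, ← ih, Nat.mul_succ]
    simp only [partialNorm_apply, prod_range_add, ← pow_mul, ← MulAut.mul_apply, ← pow_add,
      add_comm _ (a * b)]

/-- The element `y` is corrected by a coboundary `w / τ w`. -/
lemma exists_partialNorm_eq_of_partialNorm_eq_pow {a b : ℕ} {y : M}
    (h90 : ∀ z, (τ ^ (a * b)) z = z → partialNorm (τ ^ a) b z = 1 → ∃ w, z * w = (τ ^ a) w)
    (hx : τ x = x) (hy : (τ ^ (a * b)) y = y) (hyx : partialNorm τ (a * b) y = x ^ b) :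
    ∃ u, (τ ^ a) u = u ∧ partialNorm τ a u = x := by
  obtain ⟨w, hw⟩ := h90 (partialNorm τ a y / x)
    (by rw [map_div, map_partialNorm _ (.pow_self τ _), hy, pow_apply_eq_self hx])
    (by rw [map_div, partialNorm_comm (.pow_self τ a), ← partialNorm_mul_apply, hyx,
      partialNorm_of_apply_eq_self (pow_apply_eq_self hx a), div_self'])
  have hu : partialNorm τ a (y * (w / τ w)) = x := by
    rw [map_mul, partialNorm_div_apply, ← hw, div_mul_cancel_right, inv_div, mul_div_cancel]
  exact ⟨_, pow_apply_eq_self_of_partialNorm (by rw [hu, hx]), hu⟩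

end PartialNorm

section IterNorm

variable {A : ℕ → Type*} [∀ n, CommGroup (A n)]

/-- The composite `A (n + k) → A n` of `k` successive transition maps of a tower. -/
def iterNorm (Nm : ∀ n, A (n + 1) →* A n) (n : ℕ) : ∀ k : ℕ, A (n + k) →* A n
  | 0 => MonoidHom.id _
  | k + 1 => (iterNorm Nm n k).comp (Nm (n + k))

variable {Nm : ∀ n, A (n + 1) →* A n}

lemma range_iterNorm_zero (n : ℕ) : (iterNorm Nm n 0).range = ⊤ :=
  MonoidHom.range_eq_top.2 Function.surjective_id

lemma range_iterNorm_succ (n k : ℕ) :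
    (iterNorm Nm n (k + 1)).range = (Nm (n + k)).range.map (iterNorm Nm n k) :=
  MonoidHom.range_comp _ _

lemma antitone_range_iterNorm (Nm : ∀ n, A (n + 1) →* A n) (n : ℕ) :
    Antitone fun k => (iterNorm Nm n k).range :=
  antitone_nat_of_succ_le fun k => range_iterNorm_succ (Nm := Nm) n k ▸ Subgroup.map_le_range _ _

lemma iterNorm_apply_of_map_eq {W : ∀ m, A m} (n k : ℕ)
    (h : ∀ m < n + k, Nm m (W (m + 1)) = W m) : iterNorm Nm n k (W (n + k)) = W n := by
  induction k with
  | zero => rfl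
  | succ k ih =>
    change iterNorm Nm n k (Nm (n + k) (W (n + k + 1))) = W n
    rw [h (n + k) (by lia)]
    exact ih fun m hm => h m (by lia)

lemma exists_map_eq_of_lt (Nm : ∀ n, A (n + 1) →* A n) (N : ℕ) (w : A N) :
    ∃ W : ∀ m, A m, W N = w ∧ ∀ m < N, Nm m (W (m + 1)) = W m := by
  induction N with
  | zero => exact ⟨Function.update (fun _ => 1) 0 w, by simp, by simp⟩
  | succ N ih =>
    obtain ⟨W, hWN, hW⟩ := ih (Nm N w)
    refine ⟨Function.update W (N + 1) w, by simp, fun m hm => ?_⟩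
    rw [Function.update_of_ne hm.ne]
    obtain h | rfl := Nat.lt_succ_iff_lt_or_eq.1 hm
    · rw [Function.update_of_ne (by lia), hW m h]
    · rw [Function.update_self, hWN]

end IterNorm

section PTower

variable {p : ℕ} {G H : Type*} [CommGroup G] [CommGroup H]

/-- The canonical map from a commutative group to the product of its quotients `G / G ^ (p ^ m)`,
with values in the `p`-completion. -/
def toPTower (p : ℕ) (G : Type*) [CommGroup G] : G →* pTower p G :=
  MonoidHom.pi fun m => QuotientGroup.mk' (pModRange p G m)

lemma toPTower_mem_pCompletion (u : G) : toPTower p G u ∈ pCompletion p G := fun _ => rfl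

lemma exists_toPTower_apply_eq (y : pTower p G) (m : ℕ) : ∃ u : G, toPTower p G u m = y m :=
  QuotientGroup.mk_surjective (y m)

lemma pTowerMap_id : pTowerMap p (.id G) = .id (pTower p G) :=
  MonoidHom.ext fun y => funext fun i => QuotientGroup.map_id_apply _ (pModRange_le_comap _ i) (y i)

lemma pTowerMap_toPTower (φ : G →* H) (u : G) :
    pTowerMap p φ (toPTower p G u) = toPTower p H (φ u) := rfl

lemma pTowerMap_apply_congr (φ : G →* H) {y z : pTower p G} {m : ℕ} (h : y m = z m) :
    pTowerMap p φ y m = pTowerMap p φ z m :=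
  congrArg (QuotientGroup.map _ _ φ (pModRange_le_comap φ m)) h

lemma apply_eq_apply_of_le {y z : pTower p G} (hy : y ∈ pCompletion p G)
    (hz : z ∈ pCompletion p G) {i k : ℕ} (hik : i ≤ k) (h : y k = z k) : y i = z i :=
  Nat.decreasingInduction (motive := fun m _ => y m = z m)
    (fun m _ h => by rw [← hy m, ← hz m, h]) h hik

lemma toPTower_apply_mem_map_iff {R : Subgroup G} {m : ℕ} (hR : pModRange p G m ≤ R) {u : G} :
    toPTower p G u m ∈ R.map (QuotientGroup.mk' (pModRange p G m)) ↔ u ∈ R :=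
  SetLike.ext_iff.1 (Subgroup.comap_map_eq_self (by rwa [QuotientGroup.ker_mk'])) u

end PTower

/-- A sequence in the towers `∏ A n / (A n) ^ (p ^ m)` that lies in the inverse limit, along `Nm`,
of the `p`-completions of the `A n`. -/
structure IsNormCompatible (p : ℕ) {A : ℕ → Type*} [∀ n, CommGroup (A n)]
    (Nm : ∀ n, A (n + 1) →* A n) (g : ∀ n, pTower p (A n)) : Prop where
  mem_pCompletion : ∀ n, g n ∈ pCompletion p (A n)
  map_eq : ∀ n, pTowerMap p (Nm n) (g (n + 1)) = g n

namespace IsNormCompatible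

variable {p : ℕ} {A : ℕ → Type*} [∀ n, CommGroup (A n)] {Nm : ∀ n, A (n + 1) →* A n}
  {f g : ∀ n, pTower p (A n)}

lemma toPTower_iterNorm_apply (hg : IsNormCompatible p Nm g) {n k i : ℕ} {u : A (n + k)}
    (hu : toPTower p (A (n + k)) u i = g (n + k) i) :
    toPTower p (A n) (iterNorm Nm n k u) i = g n i := by
  induction k with
  | zero => exact hu
  | succ k ih =>
    refine ih ?_
    rw [← pTowerMap_toPTower, pTowerMap_apply_congr _ hu]
    exact congrFun (hg.map_eq (n + k)) i

/-- The limit point is taken along an ultrafilter. -/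
lemma exists_frequently_eq [∀ n i, Finite (A n ⧸ pModRange p (A n) i)] (W : ℕ → ∀ m, A m)
    (hW : ∀ k, ∀ m < k, Nm m (W k (m + 1)) = W k m) :
    ∃ g, IsNormCompatible p Nm g ∧
      ∀ m i, ∃ᶠ k in Filter.atTop, toPTower p (A m) (W k m) i = g m i := by
  have hex (m i : ℕ) : ∃ c : A m ⧸ pModRange p (A m) i,
      ∀ᶠ k in (Filter.hyperfilter ℕ : Filter ℕ), toPTower p (A m) (W k m) i = c := by
    rw [← Ultrafilter.eventually_exists_iff]
    exact .of_forall fun k => ⟨_, rfl⟩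
  choose g hg using hex
  refine ⟨g, ⟨fun n i => ?_, fun n => funext fun i => ?_⟩, fun m i =>
    (hg m i).frequently.filter_mono Nat.hyperfilter_le_atTop⟩
  · obtain ⟨k, h₁, h₂⟩ := ((hg n (i + 1)).and (hg n i)).exists
    rw [← h₁, ← h₂]
    rfl
  · obtain ⟨k, ⟨h₁, h₂⟩, hk⟩ := (((hg (n + 1) i).and (hg n i)).and
      (Nat.hyperfilter_le_atTop (Filter.eventually_gt_atTop n))).exists
    rw [← h₂, ← hW k n hk, ← pTowerMap_toPTower, pTowerMap_apply_congr _ h₁]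

lemma exists_apply_eq_of_forall_mem [∀ n i, Finite (A n ⧸ pModRange p (A n) i)] {n : ℕ}
    {y : pTower p (A n)} (hy : y ∈ pCompletion p (A n))
    (h : ∀ k, y k ∈ (iterNorm Nm n k).range.map (QuotientGroup.mk' _)) :
    ∃ g, IsNormCompatible p Nm g ∧ g n = y := by
  have hex (k : ℕ) : ∃ W : ∀ m, A m,
      (∀ m < n + k, Nm m (W (m + 1)) = W m) ∧ toPTower p (A n) (W n) k = y k := by
    obtain ⟨_, ⟨w, rfl⟩, hw⟩ := h k
    obtain ⟨W, hWw, hW⟩ := exists_map_eq_of_lt Nm (n + k) w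
    exact ⟨W, hW, by rwa [← iterNorm_apply_of_map_eq n k hW, hWw]⟩
  choose W hW hWy using hex
  obtain ⟨g, hg, hgW⟩ := exists_frequently_eq (p := p) W fun k m hm => hW k m (by lia)
  refine ⟨g, hg, funext fun i => ?_⟩
  obtain ⟨k, hk, hik⟩ := ((hgW n i).and_eventually (Filter.eventually_ge_atTop i)).exists
  rw [← hk]
  exact apply_eq_apply_of_le (toPTower_mem_pCompletion _) hy hik (hWy k)

lemma apply_mem_map_range_iterNorm (hg : IsNormCompatible p Nm g) (n k : ℕ) :
    g n k ∈ (iterNorm Nm n k).range.map (QuotientGroup.mk' _) := by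
  obtain ⟨u, hu⟩ := exists_toPTower_apply_eq (g (n + k)) k
  exact ⟨_, ⟨u, rfl⟩, hg.toPTower_iterNorm_apply hu⟩

lemma mul_toPTower_eq_of_le (hf : IsNormCompatible p Nm f) {t : ∀ m, A m →* A m}
    (ht : ∀ m u, t m (Nm m u) = Nm m (t (m + 1) u)) {N i : ℕ} {W : ∀ m, A m}
    (hW : ∀ m < N, Nm m (W (m + 1)) = W m)
    (h : f N i * toPTower p (A N) (W N) i = toPTower p (A N) (t N (W N)) i) {m : ℕ} (hm : m ≤ N) :
    f m i * toPTower p (A m) (W m) i = toPTower p (A m) (t m (W m)) i := by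
  refine Nat.decreasingInduction (motive := fun m _ =>
    f m i * toPTower p (A m) (W m) i = toPTower p (A m) (t m (W m)) i) (fun m hm h => ?_) h hm
  rw [← Pi.mul_apply] at h ⊢
  rw [← hW m hm, ht, ← hf.map_eq, ← pTowerMap_toPTower, ← pTowerMap_toPTower, ← map_mul,
    pTowerMap_apply_congr _ h]

lemma exists_mul_eq_of_forall_exists [∀ n i, Finite (A n ⧸ pModRange p (A n) i)]
    (hf : IsNormCompatible p Nm f) {t : ∀ m, A m →* A m}
    (ht : ∀ m u, t m (Nm m u) = Nm m (t (m + 1) u)) (n : ℕ)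
    (h : ∀ k, ∃ w, f (n + k) k * toPTower p (A (n + k)) w k = toPTower p _ (t (n + k) w) k) :
    ∃ g, IsNormCompatible p Nm g ∧ ∀ m, f m * g m = pTowerMap p (t m) (g m) := by
  choose w hw using h
  choose W hWw hW using fun k => exists_map_eq_of_lt Nm (n + k) (w k)
  obtain ⟨g, hg, hgW⟩ := exists_frequently_eq (p := p) W fun k m hm => hW k m (by lia)
  refine ⟨g, hg, fun m => funext fun i => ?_⟩
  obtain ⟨k, hk, hik⟩ :=
    ((hgW m i).and_eventually (Filter.eventually_ge_atTop (max m i))).exists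
  have h₁ : f (n + k) i * toPTower p _ (w k) i = toPTower p _ (t (n + k) (w k)) i :=
    apply_eq_apply_of_le (mul_mem (hf.mem_pCompletion _) (toPTower_mem_pCompletion _))
      (toPTower_mem_pCompletion _) (by lia) (hw k)
  rw [← hWw k] at h₁
  rw [Pi.mul_apply, ← hk, hf.mul_toPTower_eq_of_le ht (hW k) h₁ (by lia : m ≤ n + k),
    ← pTowerMap_toPTower, pTowerMap_apply_congr _ hk]

end IsNormCompatible

/-- The properties of the unit groups `A n` of the layers of a `ℤ_p`-extension that its descent
sequence rests on: `j n` embeds `A n` into a group `M` as the fixed points of `γ ^ (p ^ n)`, `Nm n`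
is the norm, of index `p`, Hilbert's Theorem 90 holds, and the `A n` are `p`-adically of finite
type. -/
structure IsNormTower (p : ℕ) {M : Type*} [CommGroup M] {A : ℕ → Type*} [∀ n, CommGroup (A n)]
    (j : ∀ n, A n →* M) (Nm : ∀ n, A (n + 1) →* A n) (γ : MulAut M) : Prop where
  injective : ∀ n, Function.Injective (j n)
  mem_range_iff : ∀ n x, x ∈ (j n).range ↔ (γ ^ p ^ n) x = x
  map_norm : ∀ n x, j n (Nm n x) = partialNorm (γ ^ p ^ n) p (j (n + 1) x)
  hilbert90 : ∀ n k x, (γ ^ p ^ (n + k)) x = x → partialNorm (γ ^ p ^ n) (p ^ k) x = 1 →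
    ∃ y, (γ ^ p ^ (n + k)) y = y ∧ x * y = (γ ^ p ^ n) y
  index_range : ∀ n, (Nm n).range.index = p
  finite_quotient : ∀ n i, Finite (A n ⧸ pModRange p (A n) i)

namespace IsNormTower

variable {p : ℕ} {M : Type*} [CommGroup M] {A : ℕ → Type*} [∀ n, CommGroup (A n)]
  {j : ∀ n, A n →* M} {Nm : ∀ n, A (n + 1) →* A n} {γ : MulAut M} {n : ℕ}

lemma pow_apply (S : IsNormTower p j Nm γ) (x : A n) : (γ ^ p ^ n) (j n x) = j n x :=
  (S.mem_range_iff n _).1 ⟨x, rfl⟩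

lemma map_mem_range_add (S : IsNormTower p j Nm γ) (x : A n) (k : ℕ) :
    j n x ∈ (j (n + k)).range := by
  rw [S.mem_range_iff, pow_add, pow_mul]
  exact pow_apply_eq_self (S.pow_apply x) _

lemma map_iterNorm (S : IsNormTower p j Nm γ) (n k : ℕ) (x : A (n + k)) :
    j n (iterNorm Nm n k x) = partialNorm (γ ^ p ^ n) (p ^ k) (j (n + k) x) := by
  induction k with
  | zero => rw [pow_zero, partialNorm_one_apply]; rfl
  | succ k ih =>
    change j n (iterNorm Nm n k (Nm (n + k) x)) = _
    rw [ih, S.map_norm, pow_succ, partialNorm_mul_apply, ← pow_mul, ← pow_add]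
    rfl

lemma iterNorm_eq_pow (S : IsNormTower p j Nm γ) {k : ℕ} {x : A (n + k)} {c : A n}
    (h : j (n + k) x = j n c) : iterNorm Nm n k x = c ^ p ^ k :=
  S.injective n <| by
    rw [S.map_iterNorm, h, partialNorm_of_apply_eq_self (S.pow_apply c), map_pow]

lemma pModRange_le_range_iterNorm (S : IsNormTower p j Nm γ) (n k : ℕ) :
    pModRange p (A n) k ≤ (iterNorm Nm n k).range := by
  rintro _ ⟨c, rfl⟩
  obtain ⟨x, hx⟩ := S.map_mem_range_add c k
  exact ⟨x, S.iterNorm_eq_pow hx⟩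

lemma mem_range_of_pow_mem (S : IsNormTower p j Nm γ) {k : ℕ} {x : A n}
    (hx : x ^ p ^ k ∈ (iterNorm Nm n (k + 1)).range) : x ∈ (Nm n).range := by
  obtain ⟨y, hy⟩ := hx
  have hp : (γ ^ p ^ n) ^ p = γ ^ p ^ (n + 1) := by rw [← pow_mul, ← pow_succ]
  have hpk : (γ ^ p ^ n) ^ (p * p ^ k) = γ ^ p ^ (n + (k + 1)) := by
    rw [← pow_mul, ← pow_succ', ← pow_add]
  obtain ⟨u, hu, hux⟩ := exists_partialNorm_eq_of_partialNorm_eq_pow (τ := γ ^ p ^ n) (a := p)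
    (b := p ^ k) (x := j n x) (y := j (n + (k + 1)) y) (fun z hz hz₁ => by
      rw [hpk, ← add_assoc, add_right_comm] at hz
      rw [hp] at hz₁ ⊢
      obtain ⟨w, -, hw⟩ := S.hilbert90 (n + 1) k z hz hz₁
      exact ⟨w, hw⟩)
    (S.pow_apply x) (by rw [hpk]; exact S.pow_apply y)
    (by rw [← pow_succ', ← S.map_iterNorm, hy, map_pow])
  obtain ⟨v, rfl⟩ := (S.mem_range_iff (n + 1) u).2 (hp ▸ hu)
  exact ⟨v, S.injective n ((S.map_norm n v).trans hux)⟩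

lemma index_range_iterNorm_dvd (S : IsNormTower p j Nm γ) (n k : ℕ) :
    (iterNorm Nm n k).range.index ∣ p ^ k := by
  induction k with
  | zero => rw [range_iterNorm_zero, Subgroup.index_top, pow_zero]
  | succ k ih =>
    rw [range_iterNorm_succ, Subgroup.index_map, pow_succ']
    refine Nat.mul_dvd_mul ?_ ih
    rw [← S.index_range (n + k)]
    exact Subgroup.index_dvd_of_le le_sup_left

lemma exists_mul_toPTower_eq (S : IsNormTower p j Nm γ) {t : ∀ m, A m →* A m}
    (ht : ∀ m u, j m (t m u) = (γ ^ p ^ n) (j m u)) {f : ∀ n, pTower p (A n)}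
    (hf : IsNormCompatible p Nm f) (hfn : f n = 1) (k : ℕ) :
    ∃ w, f (n + k) k * toPTower p (A (n + k)) w k = toPTower p _ (t (n + k) w) k := by
  obtain ⟨e, he⟩ := exists_toPTower_apply_eq (f (n + k)) (k + k)
  obtain ⟨c, hc⟩ : iterNorm Nm n k e ∈ pModRange p (A n) (k + k) := by
    rw [← QuotientGroup.eq_one_iff]
    exact (hf.toPTower_iterNorm_apply he).trans (congrFun hfn _)
  obtain ⟨c', hc'⟩ := S.map_mem_range_add c k
  obtain ⟨_, hw, hew⟩ := S.hilbert90 n k (j (n + k) (e / c' ^ p ^ k)) (S.pow_apply _) (by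
    rw [← S.map_iterNorm, map_div, map_pow, S.iterNorm_eq_pow hc', ← hc, powMonoidHom_apply,
      pow_add, pow_mul, div_self', map_one])
  obtain ⟨w, rfl⟩ := (S.mem_range_iff _ _).2 hw
  refine ⟨w, ?_⟩
  rw [← ht, ← map_mul] at hew
  have hek : toPTower p _ e k = f (n + k) k :=
    apply_eq_apply_of_le (toPTower_mem_pCompletion e) (hf.mem_pCompletion _) (by lia) he
  have hck : toPTower p (A (n + k)) (c' ^ p ^ k) k = 1 :=
    (QuotientGroup.eq_one_iff _).2 ⟨c', rfl⟩
  rw [← S.injective _ hew, map_mul, map_div, Pi.mul_apply, Pi.div_apply, hck, div_one, hek]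

lemma exists_mul_eq_pTowerMap (S : IsNormTower p j Nm γ) {t : ∀ m, A m →* A m}
    (ht : ∀ m u, j m (t m u) = (γ ^ p ^ n) (j m u)) {f : ∀ n, pTower p (A n)}
    (hf : IsNormCompatible p Nm f) (hfn : f n = 1) :
    ∃ g, IsNormCompatible p Nm g ∧ ∀ m, f m * g m = pTowerMap p (t m) (g m) := by
  have := S.finite_quotient
  refine hf.exists_mul_eq_of_forall_exists (fun m u => S.injective m ?_) n
    (S.exists_mul_toPTower_eq ht hf hfn)
  rw [ht, S.map_norm, S.map_norm, ht, map_partialNorm _ (.pow_pow_self γ _ _)]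

variable [hp : Fact p.Prime]

lemma exists_notMem_range (S : IsNormTower p j Nm γ) (n : ℕ) : ∃ x, x ∉ (Nm n).range := by
  by_contra! h
  refine hp.out.one_lt.ne ?_
  rw [← S.index_range n, (Subgroup.eq_top_iff' _).2 h, Subgroup.index_top]

lemma orderOf_mk (S : IsNormTower p j Nm γ) {x : A n} (hx : x ∉ (Nm n).range) (k : ℕ) :
    orderOf (x : A n ⧸ (iterNorm Nm n k).range) = p ^ k := by
  obtain _ | k := k
  · rw [pow_zero, orderOf_eq_one_iff, QuotientGroup.eq_one_iff, range_iterNorm_zero]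
    trivial
  · refine orderOf_eq_prime_pow (fun h => hx ?_) ?_
    · rw [← QuotientGroup.mk_pow, QuotientGroup.eq_one_iff] at h
      exact S.mem_range_of_pow_mem h
    · rw [← QuotientGroup.mk_pow, QuotientGroup.eq_one_iff]
      exact S.pModRange_le_range_iterNorm n _ ⟨x, rfl⟩

lemma index_range_iterNorm (S : IsNormTower p j Nm γ) (n k : ℕ) :
    (iterNorm Nm n k).range.index = p ^ k := by
  obtain ⟨x, hx⟩ := S.exists_notMem_range n
  refine (S.index_range_iterNorm_dvd n k).antisymm ?_
  rw [← S.orderOf_mk hx k]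
  exact orderOf_dvd_natCard _

end IsNormTower

/-! ### Compatible systems of cyclic quotients -/

lemma exists_monoidHom_zmod_of_orderOf_eq_index {G : Type*} [CommGroup G] {R : Subgroup G} {x : G}
    {N : ℕ} (hN : N ≠ 0) (hR : R.index = N) (hx : orderOf (x : G ⧸ R) = N) :
    ∃ ψ : G →* Multiplicative (ZMod N), ψ x = .ofAdd 1 ∧ ψ.ker = R := by
  have hcard : Nat.card (G ⧸ R) = N := hR
  have : Finite (G ⧸ R) := Nat.finite_of_card_ne_zero (hcard ▸ hN)
  have hgen : ∀ y, y ∈ Subgroup.zpowers (x : G ⧸ R) := fun y => by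
    rw [Subgroup.eq_top_of_card_eq (Subgroup.zpowers (x : G ⧸ R))
      (by rw [Nat.card_zpowers, hx, hcard])]
    trivial
  exact ⟨((zmodMulEquivOfGenerator hgen hcard).symm : _ →* _).comp (QuotientGroup.mk' R),
    zmodMulEquivOfGenerator_symm_apply_generator hgen hcard,
    (MonoidHom.ker_mulEquiv_comp _ _).trans (QuotientGroup.ker_mk' R)⟩

lemma castHom_toAdd_apply_of_ker_le {G : Type*} [Group G] {N N' : ℕ} (h : N ∣ N')
    {ψ : G →* Multiplicative (ZMod N)} {ψ' : G →* Multiplicative (ZMod N')} {x : G}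
    (hψ : ψ x = .ofAdd 1) (hψ' : ψ' x = .ofAdd 1) (hker : ψ'.ker ≤ ψ.ker) (u : G) :
    ZMod.castHom h (ZMod N) (ψ' u).toAdd = (ψ u).toAdd := by
  obtain ⟨i, hi⟩ := ZMod.intCast_surjective (ψ' u).toAdd
  have hi' : ψ' u = ψ' (x ^ i) := Multiplicative.toAdd.injective <| by simp [hψ', ← hi]
  have hu : ψ u = ψ (x ^ i) := by
    rw [← div_eq_one, ← map_div] at hi' ⊢
    exact hker hi'
  simp [hu, ← hi, hψ]

lemma pModRange_le_ker {p : ℕ} {G : Type*} [CommGroup G] {k : ℕ}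
    (ψ : G →* Multiplicative (ZMod (p ^ k))) : pModRange p G k ≤ ψ.ker := by
  rintro _ ⟨u, rfl⟩
  rw [MonoidHom.mem_ker, powMonoidHom_apply, map_pow]
  exact Multiplicative.toAdd.injective (by simp [toAdd_pow])

section PadicInt

variable {p : ℕ} [hp : Fact p.Prime]

lemma toZModPow_eq_appr (z : ℤ_[p]) (k : ℕ) : PadicInt.toZModPow k z = (z.appr k : ZMod (p ^ k)) :=
  rfl

lemma exists_toZModPow_eq (a : ∀ k, ZMod (p ^ k))
    (ha : ∀ k, ZMod.castHom (pow_dvd_pow p k.le_succ) (ZMod (p ^ k)) (a (k + 1)) = a k) :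
    ∃ z : ℤ_[p], ∀ k, PadicInt.toZModPow k z = a k := by
  choose b hb using fun k => ZMod.intCast_surjective (a k)
  have hdvd (i : ℕ) : (p : ℤ) ^ i ∣ b (i + 1) - b i := by
    rw [← Nat.cast_pow, ← ZMod.intCast_eq_intCast_iff_dvd_sub, hb, ← ha, ← hb (i + 1), map_intCast]
  exact ⟨_, fun k => (PadicInt.toZModPow_ofIntSeq_of_pow_dvd_sub b p hdvd k).trans (hb k)⟩

lemma exists_monoidHom_padicInt {H : Type*} [Group H]
    (φ : ∀ k, H →* Multiplicative (ZMod (p ^ k)))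
    (hφ : ∀ k y, ZMod.castHom (pow_dvd_pow p k.le_succ) (ZMod (p ^ k)) (φ (k + 1) y).toAdd =
      (φ k y).toAdd) :
    ∃ Φ : H →* Multiplicative ℤ_[p], ∀ k y, PadicInt.toZModPow k (Φ y).toAdd = (φ k y).toAdd := by
  choose Φ hΦ using fun y => exists_toZModPow_eq (fun k => (φ k y).toAdd) fun k => hφ k y
  have hmul (y z : H) : Φ (y * z) = Φ y + Φ z :=
    PadicInt.ext_of_toZModPow.1 fun k => by simp only [map_add, hΦ, map_mul, toAdd_mul]
  exact ⟨.mk' (fun y => .ofAdd (Φ y)) fun y z => congrArg Multiplicative.ofAdd (hmul y z),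
    fun k y => hΦ y k⟩

variable {G : Type*} [CommGroup G]

lemma exists_mem_pCompletion_apply_eq_pow_appr (x : G) (a : ℤ_[p]) :
    ∃ y ∈ pCompletion p G, ∀ k, y k = toPTower p G (x ^ a.appr k) k := by
  refine ⟨_, fun k => ?_, fun k => rfl⟩
  obtain ⟨c, hc⟩ := a.dvd_appr_sub_appr k (k + 1) k.le_succ
  refine QuotientGroup.eq.2 ⟨(x ^ c)⁻¹, ?_⟩
  rw [MonoidHom.id_apply, ← Nat.sub_add_cancel (a.appr_mono k.le_succ), hc, powMonoidHom_apply,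
    pow_add, mul_inv, inv_mul_cancel_right, inv_pow, ← pow_mul, mul_comm c]

theorem exists_surjective_pCompletion_padicInt {ψ : ∀ k, G →* Multiplicative (ZMod (p ^ k))}
    {x : G} (hψ : ∀ k, ψ k x = .ofAdd 1) (hker : Antitone fun k => (ψ k).ker) :
    ∃ φ : pCompletion p G →* Multiplicative ℤ_[p], Function.Surjective φ ∧
      ∀ y, φ y = 1 ↔ ∀ k, y.1 k ∈ (ψ k).ker.map (QuotientGroup.mk' (pModRange p G k)) := by
  let ψ' (k : ℕ) : pCompletion p G →* Multiplicative (ZMod (p ^ k)) :=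
    ((QuotientGroup.lift _ (ψ k) (pModRange_le_ker (ψ k))).comp (Pi.evalMonoidHom _ k)).comp
      (pCompletion p G).subtype
  have hψ' {k : ℕ} {y : pCompletion p G} {u : G} (hu : toPTower p G u k = y.1 k) :
      ψ' k y = ψ k u :=
    congrArg (QuotientGroup.lift _ (ψ k) (pModRange_le_ker (ψ k))) hu.symm
  obtain ⟨φ, hφ⟩ := exists_monoidHom_padicInt ψ' fun k y => by
    obtain ⟨u, hu⟩ := exists_toPTower_apply_eq y.1 (k + 1)
    rw [hψ' hu, hψ' (apply_eq_apply_of_le (toPTower_mem_pCompletion u) y.2 k.le_succ hu)]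
    exact castHom_toAdd_apply_of_ker_le _ (hψ k) (hψ (k + 1)) (hker k.le_succ) u
  refine ⟨φ, fun a => ?_, fun y => ?_⟩
  · obtain ⟨y, hy, hyx⟩ := exists_mem_pCompletion_apply_eq_pow_appr x a.toAdd
    refine ⟨⟨y, hy⟩, Multiplicative.toAdd.injective <| PadicInt.ext_of_toZModPow.1 fun k => ?_⟩
    rw [hφ, hψ' (y := ⟨y, hy⟩) (hyx k).symm, map_pow, hψ, toZModPow_eq_appr]
    simp
  · have hψy (k : ℕ) : ψ' k y = 1 ↔
        y.1 k ∈ (ψ k).ker.map (QuotientGroup.mk' (pModRange p G k)) := by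
      obtain ⟨u, hu⟩ := exists_toPTower_apply_eq y.1 k
      rw [hψ' hu, ← hu, toPTower_apply_mem_map_iff (pModRange_le_ker _), MonoidHom.mem_ker]
    simp only [← hψy, ← toAdd_eq_zero, ← hφ, ← PadicInt.ext_of_toZModPow, map_zero]

end PadicInt

theorem IsNormTower.exists_surjective_padicInt {p : ℕ} [hp : Fact p.Prime] {M : Type*} [CommGroup M]
    {A : ℕ → Type*} [∀ n, CommGroup (A n)] {j : ∀ n, A n →* M} {Nm : ∀ n, A (n + 1) →* A n}
    {γ : MulAut M} (S : IsNormTower p j Nm γ) (n : ℕ) :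
    ∃ φ : pCompletion p (A n) →* Multiplicative ℤ_[p], Function.Surjective φ ∧
      ∀ y, φ y = 1 ↔ ∃ g, IsNormCompatible p Nm g ∧ g n = y := by
  obtain ⟨x, hx⟩ := S.exists_notMem_range n
  choose ψ hψx hψ using fun k => exists_monoidHom_zmod_of_orderOf_eq_index
    (pow_ne_zero k hp.out.ne_zero) (S.index_range_iterNorm n k) (S.orderOf_mk hx k)
  obtain ⟨φ, hφ, hφ₁⟩ := exists_surjective_pCompletion_padicInt hψx
    (by simpa only [hψ] using antitone_range_iterNorm Nm n)
  have := S.finite_quotient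
  refine ⟨φ, hφ, fun y => (hφ₁ y).trans ?_⟩
  simp only [hψ]
  refine ⟨IsNormCompatible.exists_apply_eq_of_forall_mem y.2, ?_⟩
  rintro ⟨g, hg, hgy⟩ k
  exact hgy ▸ hg.apply_mem_map_range_iterNorm n k

/-! ### Cyclic extensions of local fields -/

section MulAut

variable {M D : Type*} [CommGroup M] [CommGroup D] {τ : MulAut M} {p : ℕ}

/-- The action of the automorphisms of a commutative group `M` on `M` written additively. -/
def mulAutToAddEnd : MulAut M →* AddMonoid.End (Additive M) where
  toFun τ := MonoidHom.toAdditive τ.toMonoidHom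
  map_one' := rfl
  map_mul' _ _ := rfl

lemma geom_sum_mulAutToAddEnd (τ : MulAut M) (N : ℕ) :
    (∑ i ∈ Finset.range N, mulAutToAddEnd τ ^ i : AddMonoid.End (Additive M)) =
      MonoidHom.toAdditive (partialNorm τ N) := by
  refine AddMonoidHom.ext fun x => ?_
  simp only [← map_pow]
  exact (AddMonoidHom.finsetSum_apply _ _ _).trans
    (congrArg Additive.ofMul (partialNorm_apply τ N x.toMul).symm)

theorem index_range_pow_mul_of_partialNorm [Fact p.Prime] {j : D →* M} {N : M →* D} {a d : ℚ}
    (hτ : τ ^ p = 1) (h90 : ∀ x, partialNorm τ p x = 1 → ∃ y, x * y = τ y)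
    (hj : Function.Injective j) (hrange : ∀ x, x ∈ j.range ↔ τ x = x)
    (hN : ∀ x, j (N x) = partialNorm τ p x)
    (ha : HasHerbrandQuotient (nsmulAddMonoidHom p : Additive M →+ _) a)
    (hd : HasHerbrandQuotient (nsmulAddMonoidHom p : Additive D →+ _) d) :
    (N.range.index : ℚ) ^ (p - 1) * a = d ^ p := by
  let s : AddMonoid.End (Additive M) := mulAutToAddEnd τ
  let J : Additive D →+ Additive M := MonoidHom.toAdditive j
  have hker : (1 - s : AddMonoid.End _).ker = J.range := by
    ext x
    refine Iff.trans ?_ (hrange x.toMul).symm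
    change x - s x = 0 ↔ s x = x
    rw [sub_eq_zero, eq_comm]
  have hs90 : AddMonoidHom.ker (∑ i ∈ Finset.range p, s ^ i : AddMonoid.End (Additive M)) ≤
      AddMonoidHom.range (1 - s : AddMonoid.End (Additive M)) := by
    rw [geom_sum_mulAutToAddEnd]
    intro x hx
    obtain ⟨y, hy⟩ := h90 x.toMul hx
    refine ⟨-Additive.ofMul y, ?_⟩
    change -Additive.ofMul y - s (-Additive.ofMul y) = x
    rw [map_neg, sub_neg_eq_add, neg_add_eq_iff_eq_add, add_comm]
    exact hy.symm
  let ι : Additive D →+ AddMonoidHom.ker (1 - s : AddMonoid.End (Additive M)) :=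
    J.codRestrict _ fun x => by rw [hker]; exact ⟨x, rfl⟩
  have hι : ι.range = ⊤ := by
    rw [AddMonoidHom.range_eq_top]
    rintro ⟨x, hx⟩
    obtain ⟨y, rfl⟩ := hker.le hx
    exact ⟨y, rfl⟩
  have hd' := HasHerbrandQuotient.of_injective_of_index_ne_zero (ι := ι)
    (fun x y h => hj (congrArg Subtype.val h)) (by simp [hι]) (map_nsmulAddMonoidHom ι p) hd
  have key := relIndex_range_geom_sum_pow_mul (by rw [← map_pow, hτ, map_one]) hs90 ha hd'
  have hcomp : MonoidHom.toAdditive (partialNorm τ p) = J.comp (MonoidHom.toAdditive N) :=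
    AddMonoidHom.ext fun x => (hN x.toMul).symm
  rwa [geom_sum_mulAutToAddEnd, hker, hcomp, AddMonoidHom.range_comp, AddMonoidHom.range_eq_map J,
    AddSubgroup.relIndex_map_map_of_injective _ _ hj, AddSubgroup.relIndex_top_right] at key

end MulAut

section UnitsAut

open Finset

variable {K L : Type*} [Field K] [Field L] [Algebra K L]

/-- The Galois action on the multiplicative group of a field. -/
def unitsAut : Gal(L/K) →* MulAut Lˣ :=
  MulDistribMulAction.toMulAut _ _

lemma coe_unitsAut (σ : Gal(L/K)) (x : Lˣ) : (unitsAut σ x : L) = σ x := rfl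

lemma coe_partialNorm_unitsAut (σ : Gal(L/K)) (N : ℕ) (x : Lˣ) :
    (partialNorm (unitsAut σ) N x : L) = ∏ i ∈ range N, (σ ^ i) (x : L) := by
  simp only [partialNorm_apply, Units.coe_prod, ← map_pow, coe_unitsAut]

lemma exists_sum_mul_pow_apply_ne_zero {σ : Gal(L/K)} (hσ : IsOfFinOrder σ) {b : ℕ → L}
    (hb : b 0 ≠ 0) : ∃ c, ∑ i ∈ range (orderOf σ), b i * (σ ^ i) c ≠ 0 := by
  let f : Fin (orderOf σ) → L →* L := fun i => (σ ^ (i : ℕ) : Gal(L/K))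
  have hf : Function.Injective f := fun i k h =>
    Fin.ext (pow_injOn_Iio_orderOf i.2 k.2 (AlgEquiv.ext fun c => DFunLike.congr_fun h c))
  by_contra! h
  refine hb (Fintype.linearIndependent_iff.1 ((linearIndependent_monoidHom L L).comp f hf)
    (fun i => b i) (funext fun c => ?_) ⟨0, hσ.orderOf_pos⟩)
  rw [Pi.zero_apply, ← h c, ← Fin.sum_univ_eq_sum_range (fun i => b i * (σ ^ i) c)]
  exact Finset.sum_apply c _ _

/-- Hilbert's Theorem 90. The inverse of the solution is the Lagrange resolvent. -/
theorem exists_mul_eq_unitsAut_of_partialNorm_eq_one {σ : Gal(L/K)} (hσ : IsOfFinOrder σ) {x : Lˣ}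
    (hx : partialNorm (unitsAut σ) (orderOf σ) x = 1) : ∃ y, x * y = unitsAut σ y := by
  let b (i : ℕ) : L := partialNorm (unitsAut σ) i x
  have hb (i : ℕ) : x * σ (b i) = b (i + 1) := by
    simp only [b, coe_partialNorm_unitsAut, map_prod, prod_range_succ', pow_succ',
      AlgEquiv.mul_apply]
    simp [mul_comm]
  obtain ⟨c, hc⟩ := exists_sum_mul_pow_apply_ne_zero hσ (b := b)
    (Units.ne_zero (partialNorm (unitsAut σ) 0 x))
  set w := ∑ i ∈ range (orderOf σ), b i * (σ ^ i) c with hw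
  have hxw : x * σ w = w := by
    have hterm (i : ℕ) : x * σ (b i * (σ ^ i) c) = b (i + 1) * (σ ^ (i + 1)) c := by
      rw [map_mul, ← mul_assoc, hb, pow_succ', AlgEquiv.mul_apply]
    have hend : b (orderOf σ) * (σ ^ orderOf σ) c = b 0 * (σ ^ 0) c := by
      simp only [b, hx, pow_orderOf_eq_one, pow_zero]
      simp [partialNorm_apply]
    rw [hw, map_sum, mul_sum, sum_congr rfl fun i _ => hterm i]
    have := sum_range_succ' (fun i => b i * (σ ^ i) c) (orderOf σ)
    rw [sum_range_succ, hend] at this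
    exact (add_right_cancel this).symm
  refine ⟨(Units.mk0 w hc)⁻¹, ?_⟩
  rw [map_inv, mul_inv_eq_iff_eq_mul, eq_inv_mul_iff_mul_eq, mul_comm]
  exact Units.ext hxw

lemma algebraMap_norm_eq_partialNorm [FiniteDimensional K L] [IsGalois K L] {σ : Gal(L/K)}
    (hσ : ∀ τ, τ ∈ Subgroup.zpowers σ) (x : Lˣ) :
    algebraMap K L (Algebra.norm K (x : L)) = partialNorm (unitsAut σ) (orderOf σ) x := by
  rw [Algebra.norm_eq_prod_automorphisms, coe_partialNorm_unitsAut,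
    ← IsCyclic.image_range_orderOf hσ, prod_image]
  exact fun i hi k hk => pow_injOn_Iio_orderOf (by simpa using hi) (by simpa using hk)

lemma apply_eq_self_iff_mem_range_algebraMap [FiniteDimensional K L] [IsGalois K L] {σ : Gal(L/K)}
    (hσ : ∀ τ, τ ∈ Subgroup.zpowers σ) {x : L} :
    σ x = x ↔ x ∈ Set.range (algebraMap K L) := by
  have hstab : Subgroup.zpowers σ ≤ MulAction.stabilizer Gal(L/K) x ↔ σ x = x :=
    Subgroup.zpowers_le
  rw [← hstab, (Subgroup.eq_top_iff' _).2 hσ]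
  refine Iff.trans ⟨fun h τ => h (Subgroup.mem_top τ), fun h τ _ => h τ⟩
    (IsGalois.mem_range_algebraMap_iff_fixed x).symm

lemma mem_range_units_map_algebraMap_iff [FiniteDimensional K L] [IsGalois K L] {σ : Gal(L/K)}
    (hσ : ∀ τ, τ ∈ Subgroup.zpowers σ) (x : Lˣ) :
    x ∈ (Units.map (algebraMap K L : K →* L)).range ↔ unitsAut σ x = x := by
  rw [Units.ext_iff, coe_unitsAut, apply_eq_self_iff_mem_range_algebraMap hσ]
  refine ⟨fun ⟨y, hy⟩ => ⟨y, congrArg Units.val hy⟩, fun ⟨y, hy⟩ => ?_⟩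
  have hy₀ : y ≠ 0 := fun h => x.ne_zero (by rw [← hy, h, map_zero])
  exact ⟨Units.mk0 y hy₀, Units.ext hy⟩

end UnitsAut

section LocalField

variable {p : ℕ} [Fact p.Prime] (ℓ : ℕ) [Fact ℓ.Prime]

lemma finite_quotient_pModRange_units (K : Type*) [Field K]
    [Algebra ℚ_[ℓ] K] [FiniteDimensional ℚ_[ℓ] K] (i : ℕ) :
    Finite (Kˣ ⧸ pModRange p Kˣ i) := by
  have hpi : p ^ i ≠ 0 := pow_ne_zero i (Fact.out : p.Prime).ne_zero
  obtain ⟨c, hc⟩ := exists_hasHerbrandQuotient_nsmul_padicInt (ℓ := ℓ) hpi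
  exact Nat.finite_of_card_ne_zero (hasHerbrandQuotient_nsmul_units K hpi hc).index_range_ne_zero

theorem index_range_units_norm {K L : Type*} [Field K] [Field L]
    [Algebra K L] [Algebra ℚ_[ℓ] K] [FiniteDimensional ℚ_[ℓ] K] [IsGalois K L]
    (h : Module.finrank K L = p) : (Units.map (Algebra.norm K : L →* K)).range.index = p := by
  have hp : p.Prime := Fact.out
  have : FiniteDimensional K L := .of_finrank_pos (h ▸ hp.pos)
  let _ : Algebra ℚ_[ℓ] L := ((algebraMap K L).comp (algebraMap ℚ_[ℓ] K)).toAlgebra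
  have : IsScalarTower ℚ_[ℓ] K L := .of_algebraMap_eq fun _ => rfl
  have : FiniteDimensional ℚ_[ℓ] L := .trans ℚ_[ℓ] K L
  obtain ⟨c, hc⟩ := exists_hasHerbrandQuotient_nsmul_padicInt (ℓ := ℓ) hp.ne_zero
  have hL := hasHerbrandQuotient_nsmul_units L hp.ne_zero hc
  rw [← Module.finrank_mul_finrank ℚ_[ℓ] K L, h, pow_mul] at hL
  have hcard : Nat.card Gal(L/K) = p := by rw [IsGalois.card_aut_eq_finrank, h]
  obtain ⟨σ, hσ⟩ := (isCyclic_of_prime_card hcard).exists_generator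
  have ho : orderOf σ = p := by rw [orderOf_eq_card_of_forall_mem_zpowers hσ, hcard]
  have hσp : unitsAut σ ^ p = 1 := by rw [← ho, ← map_pow, pow_orderOf_eq_one, map_one]
  have h90 (x : Lˣ) (hx : partialNorm (unitsAut σ) p x = 1) : ∃ y, x * y = unitsAut σ y :=
    exists_mul_eq_unitsAut_of_partialNorm_eq_one (isOfFinOrder_of_finite σ) (by rwa [ho])
  have key := index_range_pow_mul_of_partialNorm (j := Units.map (algebraMap K L : K →* L))
    (N := Units.map (Algebra.norm K)) hσp h90
    (Units.map_injective (algebraMap K L).injective) (mem_range_units_map_algebraMap_iff hσ)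
    (fun x => Units.ext (by rw [← ho]; exact algebraMap_norm_eq_partialNorm hσ x)) hL
    (hasHerbrandQuotient_nsmul_units K hp.ne_zero hc)
  rw [mul_pow, ← pow_sub_one_mul hp.ne_zero (p : ℚ), mul_left_comm] at key
  have hpow := mul_right_cancel₀ (Nat.cast_ne_zero.2 hp.ne_zero)
    (mul_left_cancel₀ (pow_ne_zero p (pow_ne_zero _ hc.pos.ne')) key)
  exact Nat.pow_left_injective (Nat.sub_ne_zero_of_lt hp.one_lt) (mod_cast hpow)

end LocalField

/-! ### The layers of a `ℤ_p`-extension -/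

section ZpExtension

variable {p : ℕ} [Fact p.Prime] {E Einf : Type*} [Field E] [Field Einf] [Algebra E Einf]
  (ρ : Gal(Einf/E) ≃* Multiplicative ℤ_[p])

lemma mem_gammaSub_iff {n : ℕ} {σ : Gal(Einf/E)} :
    σ ∈ gammaSub p ρ n ↔ (p : ℤ_[p]) ^ n ∣ (ρ σ).toAdd := by
  refine Multiplicative.ofAdd.surjective.exists.trans (exists_congr fun a => ?_)
  rw [← Nat.cast_pow, ← nsmul_eq_mul, ← toAdd_ofAdd a, ← toAdd_pow, toAdd_ofAdd,
    Multiplicative.toAdd.apply_eq_iff_eq, eq_comm]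
  rfl

lemma coe_gammaSub (n : ℕ) :
    (gammaSub p ρ n : Set Gal(Einf/E)) = Set.range fun σ : Gal(Einf/E) => σ ^ p ^ n := by
  ext σ
  refine (ρ.symm.surjective.exists.trans (exists_congr fun a => ?_)).symm
  change ρ.symm a ^ p ^ n = σ ↔ a ^ p ^ n = ρ σ
  rw [← map_pow, ρ.symm_apply_eq]

lemma isClosed_gammaSub [IsGalois E Einf] (n : ℕ) :
    IsClosed (gammaSub p ρ n : Set Gal(Einf/E)) := by
  rw [coe_gammaSub]
  exact (isCompact_range (continuous_pow (p ^ n))).isClosed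

lemma index_gammaSub (n : ℕ) : (gammaSub p ρ n).index = p ^ n := by
  let f : Multiplicative ℤ_[p] →* Multiplicative (ZMod (p ^ n)) :=
    (PadicInt.toZModPow (p := p) n).toAddMonoidHom.toMultiplicative
  have hf : Function.Surjective f := ZMod.ringHom_surjective (PadicInt.toZModPow (p := p) n)
  have hker : gammaSub p ρ n = (f.comp ρ.toMonoidHom).ker := by
    ext σ
    rw [mem_gammaSub_iff, ← Ideal.mem_span_singleton, ← PadicInt.ker_toZModPow]
    rfl
  have hrange : (f.comp ρ.toMonoidHom).range = ⊤ :=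
    MonoidHom.range_eq_top.2 (hf.comp ρ.surjective)
  rw [hker, Subgroup.index_ker, hrange, Subgroup.card_top]
  exact Nat.card_zmod _

lemma commute_of_mulEquiv {G H : Type*} [Mul G] [CommMagma H] (ρ : G ≃* H) (σ τ : G) :
    Commute σ τ :=
  ρ.injective (by rw [map_mul, map_mul, mul_comm])

instance normal_gammaSub (n : ℕ) : (gammaSub p ρ n).Normal :=
  ⟨fun σ hσ τ => by rwa [(commute_of_mulEquiv ρ τ σ).eq, mul_inv_cancel_right]⟩

theorem exists_bijective_padicInt_gammaSub (n : ℕ) :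
    ∃ e : Multiplicative ℤ_[p] →* gammaSub p ρ n, Function.Bijective e := by
  let f : Multiplicative ℤ_[p] →* Gal(Einf/E) := ρ.symm.toMonoidHom.comp (powMonoidHom (p ^ n))
  have hf (a : Multiplicative ℤ_[p]) : ρ (f a) = a ^ p ^ n := ρ.apply_symm_apply _
  refine ⟨f.codRestrict _ fun a => ⟨a, (hf a).symm⟩, fun a b h => ?_, fun ⟨σ, a, ha⟩ =>
    ⟨a, Subtype.ext (ρ.injective ((hf a).trans ha))⟩⟩
  have hab : a ^ p ^ n = b ^ p ^ n := by
    rw [← hf, ← hf]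
    exact congrArg (fun σ => ρ σ.1) h
  have hab' := congrArg Multiplicative.toAdd hab
  rw [toAdd_pow, toAdd_pow, nsmul_eq_mul, nsmul_eq_mul] at hab'
  have hp : ((p ^ n : ℕ) : ℤ_[p]) ≠ 0 := Nat.cast_ne_zero.2 (pow_ne_zero n (NeZero.ne p))
  exact Multiplicative.toAdd.injective (mul_left_cancel₀ hp hab')

/-- The topological generator of a `ℤ_p`-extension corresponding to `1 : ℤ_p`. -/
noncomputable def topGen : Gal(Einf/E) :=
  ρ.symm (Multiplicative.ofAdd 1)

lemma toAdd_map_topGen_pow (k : ℕ) : (ρ (topGen ρ ^ k)).toAdd = k := by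
  rw [map_pow, topGen, MulEquiv.apply_symm_apply, ← ofAdd_nsmul, nsmul_eq_mul, mul_one, toAdd_ofAdd]

lemma topGen_pow_mem_gammaSub_iff {n k : ℕ} : topGen ρ ^ k ∈ gammaSub p ρ n ↔ p ^ n ∣ k := by
  rw [mem_gammaSub_iff, toAdd_map_topGen_pow, ← Int.natCast_dvd_natCast, Nat.cast_pow,
    ← PadicInt.pow_p_dvd_int_iff, Int.cast_natCast]

lemma exists_natCast_add_mul_eq {k : ℕ} (hk : k ≠ 0) (a : ℤ_[p]) :
    ∃ (b : ℕ) (c : ℤ_[p]), b + k * c = a := by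
  have hk' : (k : ℤ_[p]) ≠ 0 := Nat.cast_ne_zero.2 hk
  obtain ⟨c, hc⟩ := Ideal.mem_span_singleton.1 (PadicInt.appr_spec (k : ℤ_[p]).valuation a)
  refine ⟨a.appr (k : ℤ_[p]).valuation, ↑(PadicInt.unitCoeff hk')⁻¹ * c, ?_⟩
  nth_rw 2 [PadicInt.unitCoeff_spec hk']
  linear_combination
    (p ^ (k : ℤ_[p]).valuation * c : ℤ_[p]) * (PadicInt.unitCoeff hk').mul_inv - hc

lemma exists_eq_topGen_pow_mul_pow {n k : ℕ} (hk : k ≠ 0) {σ : Gal(Einf/E)}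
    (hσ : σ ∈ gammaSub p ρ n) :
    ∃ (b : ℕ) (τ : Gal(Einf/E)), σ = (topGen ρ ^ p ^ n) ^ b * τ ^ k := by
  obtain ⟨a, ha⟩ := (mem_gammaSub_iff ρ).1 hσ
  obtain ⟨b, c, rfl⟩ := exists_natCast_add_mul_eq hk a
  refine ⟨b, ρ.symm (Multiplicative.ofAdd (p ^ n * c)),
    ρ.injective (Multiplicative.toAdd.injective ?_)⟩
  rw [ha, map_mul, toAdd_mul, ← pow_mul, toAdd_map_topGen_pow, map_pow, MulEquiv.apply_symm_apply,
    ← ofAdd_nsmul, toAdd_ofAdd, nsmul_eq_mul]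
  push_cast
  ring

variable [IsGalois E Einf]

instance isGalois_zpLayer (n : ℕ) : IsGalois E (zpLayer p ρ n) :=
  .of_fixedField_normal_subgroup _

lemma fixingSubgroup_zpLayer (n : ℕ) : (zpLayer p ρ n).fixingSubgroup = gammaSub p ρ n :=
  InfiniteGalois.fixingSubgroup_fixedField ⟨gammaSub p ρ n, isClosed_gammaSub ρ n⟩

lemma finrank_zpLayer (n : ℕ) : Module.finrank E (zpLayer p ρ n) = p ^ n := by
  rw [IntermediateField.finrank_eq_fixingSubgroup_index, fixingSubgroup_zpLayer, index_gammaSub]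

instance finiteDimensional_zpLayer (n : ℕ) : FiniteDimensional E (zpLayer p ρ n) :=
  .of_finrank_pos (by rw [finrank_zpLayer]; exact pow_pos (Fact.out : p.Prime).pos n)

lemma mem_zpLayer_iff {n : ℕ} {x : Einf} : x ∈ zpLayer p ρ n ↔ (topGen ρ ^ p ^ n) x = x := by
  refine ⟨fun h => (IntermediateField.mem_fixedField_iff _ _).1 h _
    ((topGen_pow_mem_gammaSub_iff ρ).2 dvd_rfl), fun h => ?_⟩
  let F := IntermediateField.adjoin E {x}
  have : FiniteDimensional E F :=
    IntermediateField.adjoin.finiteDimensional (Algebra.IsIntegral.isIntegral x)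
  have : F.fixingSubgroup.Normal :=
    ⟨fun σ hσ τ => by rwa [(commute_of_mulEquiv ρ τ σ).eq, mul_inv_cancel_right]⟩
  have hindex : F.fixingSubgroup.index ≠ 0 := by
    rw [← IntermediateField.finrank_eq_fixingSubgroup_index]
    exact Module.finrank_pos.ne'
  refine (IntermediateField.mem_fixedField_iff _ _).2 fun σ hσ => ?_
  obtain ⟨b, τ, rfl⟩ := exists_eq_topGen_pow_mul_pow ρ hindex hσ
  have hτ := (IntermediateField.mem_fixingSubgroup_iff _ _).1 (F.fixingSubgroup.pow_index_mem τ) x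
    (IntermediateField.mem_adjoin_simple_self E x)
  have hb : topGen ρ ^ p ^ n ∈ MulAction.stabilizer Gal(Einf/E) x := h
  rw [AlgEquiv.mul_apply, hτ]
  exact pow_mem hb b

lemma orderOf_restrictNormalHom_topGen_pow (n k : ℕ) :
    orderOf (AlgEquiv.restrictNormalHom (zpLayer p ρ (n + k)) (topGen ρ ^ p ^ n)) = p ^ k := by
  have h (i : ℕ) : AlgEquiv.restrictNormalHom (zpLayer p ρ (n + k)) (topGen ρ ^ p ^ n) ^ i = 1 ↔
      p ^ k ∣ i := by
    rw [← map_pow, ← MonoidHom.mem_ker, IntermediateField.restrictNormalHom_ker,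
      fixingSubgroup_zpLayer, ← pow_mul, topGen_pow_mem_gammaSub_iff, pow_add,
      Nat.mul_dvd_mul_iff_left (pow_pos (Fact.out : p.Prime).pos n)]
  exact Nat.dvd_antisymm (orderOf_dvd_of_pow_eq_one ((h _).2 dvd_rfl))
    ((h _).1 (pow_orderOf_eq_one _))

end ZpExtension

section UnitsVal

variable {E L : Type*} [Field E] [Field L] [Algebra E L]

/-- The inclusion of the multiplicative group of an intermediate field in that of the top field. -/
def unitsVal (F : IntermediateField E L) : Fˣ →* Lˣ :=
  Units.map F.val

lemma unitsVal_injective (F : IntermediateField E L) : Function.Injective (unitsVal F) :=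
  Units.map_injective F.val.injective

lemma mem_range_unitsVal_iff {F : IntermediateField E L} {x : Lˣ} :
    x ∈ (unitsVal F).range ↔ (x : L) ∈ F := by
  refine ⟨fun ⟨y, hy⟩ => hy ▸ (y : F).2, fun hx => ?_⟩
  have hx₀ : (⟨x, hx⟩ : F) ≠ 0 := fun h => x.ne_zero (congrArg Subtype.val h)
  exact ⟨Units.mk0 _ hx₀, Units.ext rfl⟩

lemma unitsVal_unitsAut (F : IntermediateField E L) [Normal E F] (σ : Gal(L/E)) (x : Fˣ) :
    unitsVal F (unitsAut (AlgEquiv.restrictNormalHom F σ) x) = unitsAut σ (unitsVal F x) :=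
  Units.ext (AlgEquiv.restrictNormalHom_apply F σ x)

lemma unitsVal_partialNorm (F : IntermediateField E L) [Normal E F] (σ : Gal(L/E)) (N : ℕ)
    (x : Fˣ) :
    unitsVal F (partialNorm (unitsAut (AlgEquiv.restrictNormalHom F σ)) N x) =
      partialNorm (unitsAut σ) N (unitsVal F x) := by
  simp only [partialNorm_apply, map_prod, ← map_pow, unitsVal_unitsAut]

lemma exists_mul_eq_unitsAut_of_mem {F : IntermediateField E L} [Normal E F] {σ : Gal(L/E)}
    (hσ : IsOfFinOrder (AlgEquiv.restrictNormalHom F σ)) {x : Lˣ} (hx : (x : L) ∈ F)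
    (hx₁ : partialNorm (unitsAut σ) (orderOf (AlgEquiv.restrictNormalHom F σ)) x = 1) :
    ∃ y : Lˣ, (y : L) ∈ F ∧ x * y = unitsAut σ y := by
  obtain ⟨u, rfl⟩ := mem_range_unitsVal_iff.2 hx
  rw [← unitsVal_partialNorm, ← map_one (unitsVal F), (unitsVal_injective F).eq_iff] at hx₁
  obtain ⟨y, hy⟩ := exists_mul_eq_unitsAut_of_partialNorm_eq_one hσ hx₁
  exact ⟨unitsVal F y, mem_range_unitsVal_iff.1 ⟨y, rfl⟩, by rw [← map_mul, hy, unitsVal_unitsAut]⟩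

end UnitsVal

section NormOfTower

variable {E K L : Type*} [Field E] [Field K] [Field L] [Algebra E K] [Algebra E L] [Algebra K L]
  [IsScalarTower E K L] [FiniteDimensional K L] [IsGalois K L]

lemma algebraMap_norm_eq_partialNorm_of_orderOf_eq_finrank {τ : Gal(L/E)}
    (hτ : ∀ x : K, τ (algebraMap K L x) = algebraMap K L x)
    (ho : orderOf τ = Module.finrank K L) (x : Lˣ) :
    algebraMap K L (Algebra.norm K (x : L)) = partialNorm (unitsAut τ) (Module.finrank K L) x := by
  let σ : Gal(L/K) := { τ with commutes' := hτ }
  have hσ : orderOf σ = Module.finrank K L :=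
    (orderOf_injective (AlgEquiv.restrictScalarsHom E)
      (AlgEquiv.restrictScalars_injective E) σ).symm.trans ho
  have hgen : ∀ g, g ∈ Subgroup.zpowers σ := (Subgroup.eq_top_iff' _).1 <|
    Subgroup.eq_top_of_card_eq _ (by rw [Nat.card_zpowers, hσ, IsGalois.card_aut_eq_finrank])
  rw [algebraMap_norm_eq_partialNorm hgen, hσ]
  simp only [coe_partialNorm_unitsAut]
  refine Finset.prod_congr rfl fun i _ => ?_
  exact congrArg (fun g : Gal(L/E) => g x) (map_pow (AlgEquiv.restrictScalarsHom E) σ i)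

end NormOfTower

section NormOfLE

variable {E L : Type*} [Field E] [Field L] [Algebra E L] {F K : IntermediateField E L}

/-- The norm map of the extension `K / F` defined by intermediate fields `F ≤ K`. -/
noncomputable def normOfLE (h : F ≤ K) : K →* F :=
  @Algebra.norm F K _ _ (IntermediateField.inclusion h).toRingHom.toAlgebra

variable (h : F ≤ K) [FiniteDimensional E K] [IsGalois E K]

lemma coe_normOfLE_eq_partialNorm {σ : Gal(L/E)} (hσ : ∀ y ∈ F, σ y = y)
    (ho : Module.finrank E F * orderOf (AlgEquiv.restrictNormalHom K σ) = Module.finrank E K)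
    (x : Kˣ) : (normOfLE h x : L) =
      partialNorm (unitsAut σ) (orderOf (AlgEquiv.restrictNormalHom K σ)) (unitsVal K x) := by
  let _ : Algebra F K := (IntermediateField.inclusion h).toRingHom.toAlgebra
  have : IsScalarTower E F K := .of_algebraMap_eq fun _ => rfl
  have : FiniteDimensional F K := .right E F K
  have : IsGalois F K := .tower_top_of_isGalois E F K
  have : FiniteDimensional E F := .left E F K
  have hfix (y : F) : AlgEquiv.restrictNormalHom K σ (algebraMap F K y) = algebraMap F K y :=
    Subtype.ext ((AlgEquiv.restrictNormalHom_apply K σ _).trans (hσ y y.2))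
  rw [← Module.finrank_mul_finrank E F K] at ho
  have ho' := Nat.eq_of_mul_eq_mul_left Module.finrank_pos ho
  rw [← unitsVal_partialNorm, ho']
  exact congrArg Subtype.val (algebraMap_norm_eq_partialNorm_of_orderOf_eq_finrank hfix ho' x)

theorem index_range_units_normOfLE (ℓ : ℕ) [Fact ℓ.Prime] [Algebra ℚ_[ℓ] E]
    [FiniteDimensional ℚ_[ℓ] E] {p : ℕ} [Fact p.Prime]
    (hp : Module.finrank E F * p = Module.finrank E K) :
    (Units.map (normOfLE h)).range.index = p := by
  let _ : Algebra F K := (IntermediateField.inclusion h).toRingHom.toAlgebra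
  have : IsScalarTower E F K := .of_algebraMap_eq fun _ => rfl
  have : FiniteDimensional E F := .left E F K
  have : IsGalois F K := .tower_top_of_isGalois E F K
  let _ : Algebra ℚ_[ℓ] F := ((algebraMap E F).comp (algebraMap ℚ_[ℓ] E)).toAlgebra
  have : IsScalarTower ℚ_[ℓ] E F := .of_algebraMap_eq fun _ => rfl
  have : FiniteDimensional ℚ_[ℓ] F := .trans ℚ_[ℓ] E F
  rw [← Module.finrank_mul_finrank E F K] at hp
  exact index_range_units_norm ℓ (Nat.eq_of_mul_eq_mul_left Module.finrank_pos hp).symm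

end NormOfLE

section NormTower

variable {p : ℕ} [Fact p.Prime] {E Einf : Type*} [Field E] [Field Einf] [Algebra E Einf]
  [IsGalois E Einf] (ρ : Gal(Einf/E) ≃* Multiplicative ℤ_[p])

lemma unitsAut_topGen_pow_apply_eq_self_iff {n : ℕ} {x : Einfˣ} :
    (unitsAut (topGen ρ) ^ p ^ n) x = x ↔ (x : Einf) ∈ zpLayer p ρ n := by
  rw [mem_zpLayer_iff, Units.ext_iff, ← map_pow, coe_unitsAut]

lemma exists_mul_eq_unitsAut_topGen_pow {n k : ℕ} {x : Einfˣ}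
    (hx : (unitsAut (topGen ρ) ^ p ^ (n + k)) x = x)
    (hx₁ : partialNorm (unitsAut (topGen ρ) ^ p ^ n) (p ^ k) x = 1) :
    ∃ y, (unitsAut (topGen ρ) ^ p ^ (n + k)) y = y ∧ x * y = (unitsAut (topGen ρ) ^ p ^ n) y := by
  have ho := orderOf_restrictNormalHom_topGen_pow ρ n k
  rw [← map_pow, ← ho] at hx₁
  simp only [unitsAut_topGen_pow_apply_eq_self_iff] at hx ⊢
  rw [← map_pow]
  exact exists_mul_eq_unitsAut_of_mem
    (orderOf_pos_iff.1 (ho ▸ pow_pos (Fact.out : p.Prime).pos k)) hx hx₁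

theorem isNormTower_zpLayer (ℓ : ℕ) [Fact ℓ.Prime] [Algebra ℚ_[ℓ] E] [FiniteDimensional ℚ_[ℓ] E]
    (hle : ∀ n, zpLayer p ρ n ≤ zpLayer p ρ (n + 1))
    {Nm : ∀ n : ℕ, (zpLayer p ρ (n + 1))ˣ →* (zpLayer p ρ n)ˣ}
    (hN : ∀ n x, Nm n x = normOfLE (hle n) (x : zpLayer p ρ (n + 1))) :
    IsNormTower p (fun n => unitsVal (zpLayer p ρ n)) Nm (unitsAut (topGen ρ)) where
  injective n := unitsVal_injective _
  mem_range_iff n x :=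
    mem_range_unitsVal_iff.trans (unitsAut_topGen_pow_apply_eq_self_iff ρ).symm
  map_norm n x := by
    have ho := orderOf_restrictNormalHom_topGen_pow ρ n 1
    rw [pow_one] at ho
    have key := coe_normOfLE_eq_partialNorm (hle n) (fun y => (mem_zpLayer_iff ρ).1)
      (by rw [ho, finrank_zpLayer, finrank_zpLayer, pow_succ]) x
    rw [ho, map_pow] at key
    exact Units.ext ((congrArg Subtype.val (hN n x)).trans key)
  hilbert90 n k x := exists_mul_eq_unitsAut_topGen_pow ρ
  index_range n := by
    have hNm : Nm n = Units.map (normOfLE (hle n)) := MonoidHom.ext fun x => Units.ext (hN n x)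
    rw [hNm]
    exact index_range_units_normOfLE (hle n) ℓ (by rw [finrank_zpLayer, finrank_zpLayer, pow_succ])
  finite_quotient n i := by
    let _ : Algebra ℚ_[ℓ] (zpLayer p ρ n) :=
      ((algebraMap E (zpLayer p ρ n)).comp (algebraMap ℚ_[ℓ] E)).toAlgebra
    have : IsScalarTower ℚ_[ℓ] E (zpLayer p ρ n) := .of_algebraMap_eq fun _ => rfl
    have : FiniteDimensional ℚ_[ℓ] (zpLayer p ρ n) := .trans ℚ_[ℓ] E _
    exact finite_quotient_pModRange_units ℓ _ i

end NormTower

section Descent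

variable {p : ℕ} [Fact p.Prime] {E Einf : Type*} [Field E] [Field Einf] [Algebra E Einf]
  {ρ : Gal(Einf/E) ≃* Multiplicative ℤ_[p]}
  {Nm : ∀ n : ℕ, (zpLayer p ρ (n + 1))ˣ →* (zpLayer p ρ n)ˣ}
  {act : Gal(Einf/E) → ∀ n : ℕ, (zpLayer p ρ n)ˣ →* (zpLayer p ρ n)ˣ}
  {actInf : Gal(Einf/E) → normLimit p ρ Nm →* normLimit p ρ Nm}

lemma mem_normLimit_iff {g : ∀ n, pTower p (zpLayer p ρ n)ˣ} :
    g ∈ normLimit p ρ Nm ↔ IsNormCompatible p Nm g :=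
  ⟨fun h => ⟨h.1, h.2⟩, fun h => ⟨h.1, h.2⟩⟩

lemma mem_range_normLimitProj_iff {n : ℕ} {y : pCompletion p (zpLayer p ρ n)ˣ} :
    y ∈ (normLimitProj p ρ Nm n).range ↔
      ∃ g : ∀ m, pTower p (zpLayer p ρ m)ˣ, IsNormCompatible p Nm g ∧ g n = y :=
  ⟨fun ⟨g, hg⟩ => ⟨g, mem_normLimit_iff.1 g.2, congrArg Subtype.val hg⟩,
    fun ⟨g, hg, hgn⟩ => ⟨⟨g, mem_normLimit_iff.2 hg⟩, Subtype.ext hgn⟩⟩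

lemma mem_ker_normLimitProj_iff {n : ℕ} {g : normLimit p ρ Nm} :
    g ∈ (normLimitProj p ρ Nm n).ker ↔ g.1 n = 1 :=
  Subtype.ext_iff

lemma mul_inv_mem_ker_normLimitProj {n : ℕ} {σ : Gal(Einf/E)}
    (hact : ∀ u : (zpLayer p ρ n)ˣ, (act σ n u : Einf) = σ (u : zpLayer p ρ n))
    (hactInf : ∀ g : normLimit p ρ Nm, (actInf σ g).1 n = pTowerMap p (act σ n) (g.1 n))
    (hσ : σ ∈ gammaSub p ρ n) (g : normLimit p ρ Nm) :
    actInf σ g * g⁻¹ ∈ (normLimitProj p ρ Nm n).ker := by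
  have hid : act σ n = .id _ := MonoidHom.ext fun u => Units.ext <| Subtype.ext <|
    (hact u).trans ((IntermediateField.mem_fixedField_iff _ _).1 (u : zpLayer p ρ n).2 σ hσ)
  have hg := hactInf g
  rw [hid, pTowerMap_id] at hg
  exact mem_ker_normLimitProj_iff.2 (mul_inv_eq_one.2 hg)

lemma exists_eq_mul_inv_of_mem_ker_normLimitProj {n : ℕ}
    (S : IsNormTower p (fun m => unitsVal (zpLayer p ρ m)) Nm (unitsAut (topGen ρ)))
    (hact : ∀ m (u : (zpLayer p ρ m)ˣ),
      (act (topGen ρ ^ p ^ n) m u : Einf) = (topGen ρ ^ p ^ n) (u : zpLayer p ρ m))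
    (hactInf : ∀ (g : normLimit p ρ Nm) m, (actInf (topGen ρ ^ p ^ n) g).1 m =
      pTowerMap p (act (topGen ρ ^ p ^ n) m) (g.1 m))
    {f : normLimit p ρ Nm} (hf : f ∈ (normLimitProj p ρ Nm n).ker) :
    ∃ g : normLimit p ρ Nm, f = actInf (topGen ρ ^ p ^ n) g * g⁻¹ := by
  obtain ⟨g, hg, hfg⟩ := S.exists_mul_eq_pTowerMap
    (fun m u => Units.ext (by rw [← map_pow]; exact hact m u))
    (mem_normLimit_iff.1 f.2) (mem_ker_normLimitProj_iff.1 hf)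
  let g' : normLimit p ρ Nm := ⟨g, mem_normLimit_iff.2 hg⟩
  exact ⟨g', eq_mul_inv_of_mul_eq <| Subtype.ext <| funext fun m =>
    (hfg m).trans (hactInf g' m).symm⟩

end Descent

theorem local_units_descent_exact_sequence_general {p : ℕ} [Fact p.Prime] (ℓ : ℕ)
    [Fact ℓ.Prime]
    {E : Type*} [Field E] [Algebra ℚ_[ℓ] E] [FiniteDimensional ℚ_[ℓ] E]
    {Einf : Type*} [Field Einf] [Algebra E Einf] [IsGalois E Einf]
    (ρ : Gal(Einf/E) ≃* Multiplicative ℤ_[p])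
    (hle : ∀ n, zpLayer p ρ n ≤ zpLayer p ρ (n + 1))
    {Nm : ∀ n : ℕ, (zpLayer p ρ (n + 1))ˣ →* (zpLayer p ρ n)ˣ}
    (hN : ∀ n x, Nm n x = normOfLE (hle n) (x : zpLayer p ρ (n + 1)))
    {act : Gal(Einf/E) → ∀ n : ℕ, (zpLayer p ρ n)ˣ →* (zpLayer p ρ n)ˣ}
    (hact : ∀ σ n (u : (zpLayer p ρ n)ˣ), (act σ n u : Einf) = σ (u : zpLayer p ρ n))
    {actInf : Gal(Einf/E) → normLimit p ρ Nm →* normLimit p ρ Nm}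
    (hactInf : ∀ σ (g : normLimit p ρ Nm) n, (actInf σ g).1 n = pTowerMap p (act σ n) (g.1 n))
    (n : ℕ) :
    ∃ Artin : pCompletion p (zpLayer p ρ n)ˣ →* gammaSub p ρ n,
      Function.Surjective Artin ∧
      Artin.ker = (normLimitProj p ρ Nm n).range ∧
      (normLimitProj p ρ Nm n).ker =
        Subgroup.closure {x | ∃ σ ∈ gammaSub p ρ n, ∃ g, x = actInf σ g * g⁻¹} := by
  have S := isNormTower_zpLayer ρ ℓ hle hN
  obtain ⟨φ, hφ, hφ₁⟩ := S.exists_surjective_padicInt n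
  obtain ⟨e, he⟩ := exists_bijective_padicInt_gammaSub ρ n
  refine ⟨e.comp φ, he.2.comp hφ, ?_, le_antisymm (fun f hf => ?_) ?_⟩
  · rw [MonoidHom.ker_comp_of_injective _ _ he.1]
    ext y
    rw [MonoidHom.mem_ker, hφ₁, mem_range_normLimitProj_iff]
  · obtain ⟨g, hg⟩ := exists_eq_mul_inv_of_mem_ker_normLimitProj S (hact _) (hactInf _) hf
    exact Subgroup.subset_closure ⟨_, (topGen_pow_mem_gammaSub_iff ρ).2 dvd_rfl, g, hg⟩
  · rw [Subgroup.closure_le]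
    rintro _ ⟨σ, hσ, g, rfl⟩
    exact mul_inv_mem_ker_normLimitProj (hact σ n) (fun g => hactInf σ g n) hσ g

/-- let `E/ℚ_ℓ` be a finite extension (`ℓ` any prime) and `E_∞/E` a
`ℤ_p`-extension with layers `E_n = E_∞^{Γ_n}` and `Γ_n = Gal(E_∞/E_n)`.  Let `L_n` be the
`p`-completion of `E_nˣ` and `L_∞ = lim← L_n` the inverse limit along the norm maps
(`Nm`, pinned to the field norms by `hN`).  Then for each `n` there is an exact sequence
`0 → (L_∞)_{Γ_n} → L_n → Gal(E_∞/E_n) → 0`,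
i.e. there is a surjection `Artin : L_n → Γ_n` whose kernel is exactly the image of
`L_∞`, while the kernel of `L_∞ → L_n` is the augmentation subgroup generated by the
elements `σ(g)·g⁻¹`, `σ ∈ Γ_n` (so that `L_n` contains `(L_∞)_{Γ_n}` as the kernel of the
Artin map). -/
theorem local_units_descent_exact_sequence (p ℓ : ℕ) [Fact p.Prime] [Fact ℓ.Prime]
    (hodd : Odd p)
    (E : Type*) [Field E] [Algebra ℚ_[ℓ] E] [FiniteDimensional ℚ_[ℓ] E]
    (Einf : Type*) [Field Einf] [Algebra E Einf] [IsGalois E Einf] [Algebra.IsAlgebraic E Einf]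
    (ρ : (Einf ≃ₐ[E] Einf) ≃* Multiplicative ℤ_[p])
    (hle : ∀ n, zpLayer p ρ n ≤ zpLayer p ρ (n + 1))
    (Nm : ∀ n : ℕ, (↥(zpLayer p ρ (n + 1)))ˣ →* (↥(zpLayer p ρ n))ˣ)
    (hN : ∀ (n : ℕ) (x : (↥(zpLayer p ρ (n + 1)))ˣ),
      ((Nm n x : ↥(zpLayer p ρ n)) : Einf) =
      ((@Algebra.norm (↥(zpLayer p ρ n)) (↥(zpLayer p ρ (n + 1))) _ _
          ((IntermediateField.inclusion (hle n)).toRingHom.toAlgebra)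
          (x : ↥(zpLayer p ρ (n + 1)))) : Einf))
    (act : (Einf ≃ₐ[E] Einf) → ∀ n : ℕ, (↥(zpLayer p ρ n))ˣ →* (↥(zpLayer p ρ n))ˣ)
    (hact : ∀ σ n (u : (↥(zpLayer p ρ n))ˣ),
      ((act σ n u : ↥(zpLayer p ρ n)) : Einf) = σ ((u : ↥(zpLayer p ρ n)) : Einf))
    (actInf : (Einf ≃ₐ[E] Einf) → ↥(normLimit p ρ Nm) →* ↥(normLimit p ρ Nm))
    (hactInf : ∀ σ (g : ↥(normLimit p ρ Nm)) (n : ℕ),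
      (actInf σ g : ∀ n, pTower p (↥(zpLayer p ρ n))ˣ) n =
        pTowerMap p (act σ n) ((g : ∀ n, pTower p (↥(zpLayer p ρ n))ˣ) n))
    (n : ℕ) :
    ∃ Artin : ↥(pCompletion p (↥(zpLayer p ρ n))ˣ) →* ↥(gammaSub p ρ n),
      Function.Surjective Artin ∧
      Artin.ker = (normLimitProj p ρ Nm n).range ∧
      (normLimitProj p ρ Nm n).ker =
        Subgroup.closure {x | ∃ σ ∈ gammaSub p ρ n, ∃ g : ↥(normLimit p ρ Nm),
          x = actInf σ g * g⁻¹} :=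
  local_units_descent_exact_sequence_general ℓ ρ hle (fun m x => Subtype.ext (hN m x)) hact
    hactInf n
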